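/- For every measurable function φ : S^{n-1} → [0,∞], ( ∫_{S^{n-1}} ( (Fφ)(w) )^{n} d*w )^{1/n} ≤ ( ∫_{S^{n-1}} φ(θ)^{n/(n−1)} d*θ )^{(n−1)/n}. No symmetry assumption on φ is required, and the constant 1 is sharp. (This is the sharp L^{n/k} → L^n inequality for the Funk-type transform F_k over (k−1)-dimensional geodesics, in the case k = n−1, which the paper derives from the Drury–Christ–Drouot theorem via stereographic projection.) -/

import Mathlib

/-!
With `m = n - 1`, let `K` be the star body with radial function `φ ^ (1 / m)`. In polar coordinates,
`volume K` is a multiple of `∫ φ ^ (n / m)`, and the volume of the section of `K` by `w^⊥` is a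
multiple of `Funk n φ w`. The claim thus becomes Busemann's intersection inequality: balls maximize
`∫ volume (K ∩ w^⊥) ^ n dw` among the measurable sets of given volume.

In gnomonic coordinates a hyperplane through the origin is the graph of a linear form `a` on a fixed
hyperplane `e^⊥`, and the Blaschke–Petkantschin formula expresses `volume K ^ m` as an integral over
`a` of the mean absolute determinant of `m` independent points in the projection of the section to
`e^⊥`. Hence it suffices to bound this determinant moment from below by the `(m + 1)`-st power of
the volume of the section, with equality for centred ellipsoids; this is Busemann's random simplex
inequality.

For the latter, Steiner symmetrization decreases the moment, in two steps. First replace each chord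
in one direction by an interval of the same length and barycentre: the determinant is convex along
the chord, and an interval is the smallest in the convex order among the sets of given length and
barycentre. Then move all the intervals to height zero: the heights `c` and `-c` give the same
moment by reflection, and the determinant of a basis is convex in the heights. Averaging over all
directions and translations shows that, unless a set is already a ball up to a null set, some
symmetrization moves a definite amount of its mass into the ball of the same volume.
-/

open MeasureTheory Metric Real
open scoped ENNReal NNReal

noncomputable section

/-- The normalized (probability) surface measure `d*θ` on the unit sphere of
`EuclideanSpace ℝ (Fin n)`. -/
def sphMeasure (n : ℕ) : Measure (sphere (0 : EuclideanSpace ℝ (Fin n)) 1) :=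
  ((volume : Measure (EuclideanSpace ℝ (Fin n))).toSphere Set.univ)⁻¹ •
    (volume : Measure (EuclideanSpace ℝ (Fin n))).toSphere

/-- The hyperplane Radon transform: `Rf(θ,t) = ∫_{θ^⊥} f(tθ + y) dy`, where `θ^⊥` carries its
canonical Lebesgue measure as an (n-1)-dimensional inner product space. -/
def Radon (n : ℕ) (f : EuclideanSpace ℝ (Fin n) → ℝ≥0∞)
    (θ : sphere (0 : EuclideanSpace ℝ (Fin n)) 1) (t : ℝ) : ℝ≥0∞ :=
  ∫⁻ y : ((ℝ ∙ (θ : EuclideanSpace ℝ (Fin n)))ᗮ),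
    f (t • (θ : EuclideanSpace ℝ (Fin n)) + (y : EuclideanSpace ℝ (Fin n)))

/-- The codimension-one Funk transform: the average of `φ` over the great subsphere
`S^{n-1} ∩ w^⊥` (the unit sphere of the subspace `w^⊥`, with its normalized surface
measure). -/
def Funk (n : ℕ) (φ : sphere (0 : EuclideanSpace ℝ (Fin n)) 1 → ℝ≥0∞)
    (w : sphere (0 : EuclideanSpace ℝ (Fin n)) 1) : ℝ≥0∞ :=
  ((volume : Measure ((ℝ ∙ (w : EuclideanSpace ℝ (Fin n)))ᗮ)).toSphere Set.univ)⁻¹ *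
    ∫⁻ v : sphere (0 : ((ℝ ∙ (w : EuclideanSpace ℝ (Fin n)))ᗮ)) 1,
      φ ⟨((v : ((ℝ ∙ (w : EuclideanSpace ℝ (Fin n)))ᗮ)) : EuclideanSpace ℝ (Fin n)), by
          have hv := v.2
          simp only [mem_sphere_iff_norm, sub_zero] at hv ⊢
          rwa [Submodule.coe_norm] at hv⟩
      ∂((volume : Measure ((ℝ ∙ (w : EuclideanSpace ℝ (Fin n)))ᗮ)).toSphere)

section ConvexOrder

lemma integrableOn_of_convexOn {f : ℝ → ℝ} (hf : ConvexOn ℝ Set.univ f) {S : Set ℝ}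
    (hS : Bornology.IsBounded S) : IntegrableOn f S :=
  ((hf.continuousOn isOpen_univ).mono (Set.subset_univ _)).integrableOn_Icc.mono_set
    hS.subset_Icc_sInf_sSup

lemma convexOn_affine (a b : ℝ) : ConvexOn ℝ Set.univ fun t : ℝ => a * t + b :=
  ((LinearMap.mulLeft ℝ a).convexOn convex_univ).add_const b

lemma setIntegral_affine {S : Set ℝ} (hS : Bornology.IsBounded S) (a b : ℝ) :
    ∫ t in S, (a * t + b) = volume.real S * (a * (⨍ t in S, t) + b) := by
  have hid : IntegrableOn (fun t : ℝ => t) S :=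
    (continuous_id.integrableOn_Icc (μ := volume)).mono_set hS.subset_Icc_sInf_sSup
  have hfin : volume S ≠ ∞ := hS.measure_lt_top.ne
  rw [integral_add (hid.const_mul a) (integrableOn_const hfin), integral_const_mul,
    setIntegral_const, smul_eq_mul, ← measure_smul_setAverage _ hfin, smul_eq_mul]
  ring

lemma setAverage_ball_id (c : ℝ) {r : ℝ} (hr : 0 < r) : ⨍ t in ball c r, t = c := by
  rw [Real.ball_eq_Ioo, setAverage_eq, ← integral_Ioc_eq_integral_Ioo,
    ← intervalIntegral.integral_of_le (by linarith), integral_id,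
    Real.volume_real_Ioo_of_le (by linarith), smul_eq_mul,
    show c + r - (c - r) = 2 * r by ring]
  field_simp
  ring

lemma setIntegral_ball_le_of_convexOn {g : ℝ → ℝ} (hg : ConvexOn ℝ Set.univ g) {c r : ℝ}
    (hr : 0 < r) (hl : g (c - r) = 0) (hu : g (c + r) = 0) {J : Set ℝ} (hJ : MeasurableSet J)
    (hJ' : Bornology.IsBounded J) :
    ∫ t in ball c r, g t ≤ ∫ t in J, g t := by
  have hin {t : ℝ} (ht : t ∈ ball c r) : g t ≤ 0 := by
    rw [Real.ball_eq_Ioo] at ht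
    simpa [hl, hu] using hg.le_max_of_mem_Icc (Set.mem_univ (c - r)) (Set.mem_univ (c + r))
      (Set.Ioo_subset_Icc_self ht)
  have hout {t : ℝ} (ht : t ∉ ball c r) : 0 ≤ g t := by
    rw [Real.ball_eq_Ioo, Set.mem_Ioo, not_and_or, not_lt, not_lt] at ht
    rcases ht with ht | ht
    · exact hl.symm.trans_le (hg.le_left_of_right_le'' (Set.mem_univ t) (Set.mem_univ (c + r)) ht
        (by linarith) (hu.trans hl.symm).le)
    · exact hu.symm.trans_le (hg.le_right_of_left_le'' (Set.mem_univ (c - r)) (Set.mem_univ t)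
        (by linarith) ht (hl.trans hu.symm).le)
  rw [← integral_indicator measurableSet_ball, ← integral_indicator hJ]
  refine integral_mono
    ((integrableOn_of_convexOn hg isBounded_ball).integrable_indicator measurableSet_ball)
    ((integrableOn_of_convexOn hg hJ').integrable_indicator hJ) fun t => ?_
  by_cases hI : t ∈ ball c r <;> by_cases hJt : t ∈ J <;> simp [hI, hJt, hin, hout]

lemma setIntegral_ball_setAverage_le {f : ℝ → ℝ} (hf : ConvexOn ℝ Set.univ f) {J : Set ℝ}
    (hJ : MeasurableSet J) (hJ' : Bornology.IsBounded J) :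
    ∫ t in ball (⨍ s in J, s) (volume.real J / 2), f t ≤ ∫ t in J, f t := by
  set c := ⨍ s in J, s
  set r := volume.real J / 2 with hr
  obtain hr0 | hr0 := (show 0 ≤ r by positivity).eq_or_lt
  · have hJ0 : volume J = 0 := by
      rw [← measureReal_eq_zero_iff hJ'.measure_lt_top.ne]; linarith
    simp [← hr0, setIntegral_measure_zero f hJ0]
  set a := (f (c + r) - f (c - r)) / (2 * r) with ha
  set b := f (c - r) - a * (c - r) with hb
  set g : ℝ → ℝ := fun t => f t - (a * t + b) with hg
  have hl : g (c - r) = 0 := by simp only [hg, hb]; ring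
  have hu : g (c + r) = 0 := by simp only [hg, hb, ha]; field_simp; ring
  have haff : ConcaveOn ℝ Set.univ fun t : ℝ => a * t + b :=
    ((LinearMap.mulLeft ℝ a).concaveOn convex_univ).add_const b
  have hgc : ConvexOn ℝ Set.univ g := hf.sub haff
  have hsplit {S : Set ℝ} (hS : Bornology.IsBounded S) :
      ∫ t in S, f t = (∫ t in S, g t) + volume.real S * (a * (⨍ t in S, t) + b) := by
    have := integral_sub (integrableOn_of_convexOn hf hS)
      (integrableOn_of_convexOn (convexOn_affine a b) hS)
    rw [← setIntegral_affine hS, eq_sub_iff_add_eq.1 this]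
  rw [hsplit isBounded_ball, hsplit hJ', setAverage_ball_id c hr0, Real.volume_real_ball hr0.le,
    show 2 * r = volume.real J by rw [hr]; ring]
  exact add_le_add_left (setIntegral_ball_le_of_convexOn hgc hr0 hl hu hJ hJ') _

lemma setLIntegral_ball_setAverage_enorm_le (a b : ℝ) {J : Set ℝ} (hJ : MeasurableSet J)
    (hJ' : Bornology.IsBounded J) :
    ∫⁻ t in ball (⨍ s in J, s) (volume.real J / 2), ‖a * t + b‖ₑ ≤ ∫⁻ t in J, ‖a * t + b‖ₑ := by
  have hf : ConvexOn ℝ Set.univ fun t : ℝ => ‖a * t + b‖ :=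
    (convexOn_univ_norm (E := ℝ)).comp_affineMap (a • AffineMap.id ℝ ℝ + AffineMap.const ℝ ℝ b)
  have hint {S : Set ℝ} (hS : Bornology.IsBounded S) :
      ∫⁻ t in S, ‖a * t + b‖ₑ = ENNReal.ofReal (∫ t in S, ‖a * t + b‖) := by
    simp_rw [ofReal_integral_eq_lintegral_ofReal (integrableOn_of_convexOn hf hS)
      (ae_of_all _ fun _ => norm_nonneg _), ofReal_norm]
  rw [hint isBounded_ball, hint hJ']
  exact ENNReal.ofReal_le_ofReal (setIntegral_ball_setAverage_le hf hJ hJ')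

end ConvexOrder

lemma measure_sdiff_add_le {α : Type*} [MeasurableSpace α] {μ : Measure α} {I J D Q : Set α}
    (hJ : MeasurableSet J) (hD : MeasurableSet D) (hIJ : μ I = μ J) (hfin : μ J ≠ ∞)
    (hnested : I ⊆ D ∨ D ⊆ I) (hQ : Q ⊆ D \ J) (hQ' : μ Q ≤ μ (J \ D)) :
    μ (I \ D) + μ Q ≤ μ (J \ D) := by
  rcases hnested with hID | hDI
  · rwa [Set.sdiff_eq_empty.2 hID, measure_empty, zero_add]
  · have hne : μ (J ∩ D) ≠ ∞ := measure_ne_top_of_subset Set.inter_subset_left hfin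
    rw [← ENNReal.add_le_add_iff_left hne]
    calc μ (J ∩ D) + (μ (I \ D) + μ Q)
        ≤ μ (D ∩ J) + (μ (I \ D) + μ (D \ J)) := by rw [Set.inter_comm]; gcongr
      _ = μ (I ∩ D) + μ (I \ D) := by
        rw [add_left_comm, measure_inter_add_sdiff D hJ, add_comm, Set.inter_eq_right.2 hDI]
      _ = μ (J ∩ D) + μ (J \ D) := by
        rw [measure_inter_add_sdiff I hD, measure_inter_add_sdiff J hD, hIJ]

section Lines

variable {F : Type*} [NormedAddCommGroup F] [NormedSpace ℝ F] [FiniteDimensional ℝ F]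
  [MeasurableSpace F] [BorelSpace F] {μ : Measure F} [μ.IsAddHaarMeasure]

/-- Each line parallel to `v` meets the slab `ℓ ⁻¹' Icc 0 1` in a segment of parameter length
one. -/
lemma lintegral_eq_setLIntegral_slab_lintegral_line {ℓ : StrongDual ℝ F} {v : F} (hv : ℓ v = 1)
    {f : F → ℝ≥0∞} (hf : Measurable f) :
    ∫⁻ x, f x ∂μ = ∫⁻ y in ℓ ⁻¹' Set.Icc 0 1, (∫⁻ t : ℝ, f (y + t • v)) ∂μ := by
  set S : Set (F × ℝ) := {p | ℓ p.1 - 1 ≤ p.2 ∧ p.2 ≤ ℓ p.1} with hS_def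
  have hS : MeasurableSet S := by measurability
  have hslab : MeasurableSet (ℓ ⁻¹' Set.Icc (0 : ℝ) 1) := measurableSet_Icc.preimage (by fun_prop)
  have hshift (y : F) (t : ℝ) : (y + t • v, t) ∈ S ↔ y ∈ ℓ ⁻¹' Set.Icc 0 1 := by
    rw [hS_def, Set.mem_ofPred_eq, Set.mem_preimage, Set.mem_Icc, map_add, map_smul, hv,
      smul_eq_mul, mul_one]
    constructor <;> rintro ⟨h₁, h₂⟩ <;> constructor <;> linarith
  symm
  calc ∫⁻ y in ℓ ⁻¹' Set.Icc 0 1, (∫⁻ t : ℝ, f (y + t • v)) ∂μ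
      = ∫⁻ t : ℝ, (∫⁻ y in ℓ ⁻¹' Set.Icc 0 1, f (y + t • v) ∂μ) :=
        lintegral_lintegral_swap (by fun_prop)
    _ = ∫⁻ t : ℝ, (∫⁻ x, S.indicator (fun p => f p.1) (x, t) ∂μ) := by
        refine lintegral_congr fun t => ?_
        rw [← lintegral_indicator hslab,
          ← lintegral_add_right_eq_self (fun x => S.indicator (fun p => f p.1) (x, t)) (t • v)]
        classical
        refine lintegral_congr fun y => ?_
        simp only [Set.indicator_apply, hshift]
    _ = ∫⁻ x, (∫⁻ t : ℝ, S.indicator (fun p => f p.1) (x, t)) ∂μ :=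
        (lintegral_lintegral_swap
          (f := fun x t => S.indicator (fun p => f p.1) (x, t))
          ((hf.comp measurable_fst).indicator hS).aemeasurable).symm
    _ = ∫⁻ x, f x ∂μ := by
        refine lintegral_congr fun x => ?_
        change ∫⁻ t, (Set.Icc (ℓ x - 1) (ℓ x)).indicator (fun _ => f x) t = f x
        simp [lintegral_indicator_const measurableSet_Icc]

lemma lintegral_le_of_forall_line_le {v : F} (hv : v ≠ 0) {f g : F → ℝ≥0∞} (hf : Measurable f)
    (hg : Measurable g) (h : ∀ y, ∫⁻ t : ℝ, f (y + t • v) ≤ ∫⁻ t : ℝ, g (y + t • v)) :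
    ∫⁻ x, f x ∂μ ≤ ∫⁻ x, g x ∂μ := by
  obtain ⟨ℓ, hℓ⟩ := SeparatingDual.exists_eq_one (R := ℝ) hv
  rw [lintegral_eq_setLIntegral_slab_lintegral_line hℓ hf,
    lintegral_eq_setLIntegral_slab_lintegral_line hℓ hg]
  exact lintegral_mono fun y => h y

end Lines

section ChordSymmetrization

variable {E : Type*} [NormedAddCommGroup E] [InnerProductSpace ℝ E]

/-- The point at height `t` on the line through `y` parallel to the unit vector `v`. -/
def setHeight (v y : E) (t : ℝ) : E := y + (t - inner ℝ v y) • v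

variable {v : E}

lemma setHeight_inner (v y : E) : setHeight v y (inner ℝ v y) = y := by simp [setHeight]

lemma inner_setHeight (hv : ‖v‖ = 1) (y : E) (t : ℝ) : inner ℝ v (setHeight v y t) = t := by
  simp [setHeight, inner_add_right, inner_smul_right, hv]

lemma setHeight_setHeight (hv : ‖v‖ = 1) (y : E) (s t : ℝ) :
    setHeight v (setHeight v y s) t = setHeight v y t := by
  rw [setHeight, inner_setHeight hv, setHeight, setHeight]
  module

lemma setHeight_add (v y : E) (s t : ℝ) : setHeight v y (t + s) = setHeight v y t + s • v := by
  simp only [setHeight]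
  module

lemma norm_setHeight_sq (hv : ‖v‖ = 1) (y : E) (t : ℝ) :
    ‖setHeight v y t‖ ^ 2 = ‖setHeight v y 0‖ ^ 2 + t ^ 2 := by
  have h := setHeight_add v y t 0
  rw [zero_add] at h
  rw [h, norm_add_sq_real, inner_smul_right, real_inner_comm, inner_setHeight hv, norm_smul, hv,
    Real.norm_eq_abs, mul_one, sq_abs]
  ring

@[fun_prop]
lemma continuous_setHeight (v : E) : Continuous fun p : E × ℝ => setHeight v p.1 p.2 := by
  unfold setHeight
  fun_prop

/-- The heights at which the line through `y` parallel to the unit vector `v` meets `L`. -/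
def lineSlice (v : E) (L : Set E) (y : E) : Set ℝ := setHeight v y ⁻¹' L

/-- The length of the intersection of `L` with the line through `y` parallel to the unit vector
`v`. -/
def chordLength (v : E) (L : Set E) (y : E) : ℝ := volume.real (lineSlice v L y)

/-- The mean height of the intersection of `L` with the line through `y` parallel to the unit
vector `v`. -/
def chordMean (v : E) (L : Set E) (y : E) : ℝ := ⨍ t in lineSlice v L y, t

/-- The set obtained from `L` by replacing its intersection with each line parallel to the unit
vector `v` by an open segment of the same length, the one on the line through `y` being centred at
height `c y`. For `c = 0` this is Steiner symmetrization; `c` should be constant on these lines. -/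
def chordSymm (v : E) (c : E → ℝ) (L : Set E) : Set E :=
  {y | inner ℝ v y ∈ ball (c y) (chordLength v L y / 2)}

lemma lineSlice_setHeight (hv : ‖v‖ = 1) (L : Set E) (y : E) (t : ℝ) :
    lineSlice v L (setHeight v y t) = lineSlice v L y := by
  ext s
  simp only [lineSlice, Set.mem_preimage, setHeight_setHeight hv]

lemma chordMean_setHeight (hv : ‖v‖ = 1) (L : Set E) (y : E) (t : ℝ) :
    chordMean v L (setHeight v y t) = chordMean v L y := by
  rw [chordMean, lineSlice_setHeight hv, chordMean]

lemma lineSlice_chordSymm (hv : ‖v‖ = 1) {c : E → ℝ} (hc : ∀ y t, c (setHeight v y t) = c y)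
    (L : Set E) (y : E) :
    lineSlice v (chordSymm v c L) y = ball (c y) (chordLength v L y / 2) := by
  ext t
  simp only [lineSlice, chordSymm, chordLength, Set.mem_preimage, Set.mem_ofPred_eq,
    inner_setHeight hv, hc]
  rw [← lineSlice, lineSlice_setHeight hv, lineSlice]

lemma lineSlice_closedBall (hv : ‖v‖ = 1) (ρ : ℝ) (y : E) :
    ∃ β, lineSlice v (closedBall 0 ρ) y = closedBall 0 β := by
  obtain hρ | hρ := lt_or_ge ρ 0
  · exact ⟨ρ, by simp [lineSlice, closedBall_eq_empty.2 hρ]⟩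
  have hmem (t : ℝ) : t ∈ lineSlice v (closedBall 0 ρ) y ↔
      t ^ 2 ≤ ρ ^ 2 - ‖setHeight v y 0‖ ^ 2 := by
    rw [lineSlice, Set.mem_preimage, mem_closedBall_zero_iff, ← sq_le_sq₀ (norm_nonneg _) hρ,
      norm_setHeight_sq hv, le_sub_iff_add_le']
  obtain h | h := lt_or_ge (ρ ^ 2 - ‖setHeight v y 0‖ ^ 2) 0
  · refine ⟨-1, ?_⟩
    rw [closedBall_eq_empty.2 (neg_one_lt_zero : (-1 : ℝ) < 0)]
    exact Set.eq_empty_of_forall_notMem fun t ht =>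
      ((sq_nonneg t).trans ((hmem t).1 ht)).not_gt h
  · refine ⟨√(ρ ^ 2 - ‖setHeight v y 0‖ ^ 2), ?_⟩
    ext t
    rw [hmem, mem_closedBall_zero_iff, Real.norm_eq_abs, Real.le_sqrt (abs_nonneg t) h, sq_abs]

lemma isBounded_lineSlice (hv : ‖v‖ = 1) {L : Set E} (hL : Bornology.IsBounded L) (y : E) :
    Bornology.IsBounded (lineSlice v L y) := by
  obtain ⟨ρ, hρ⟩ := hL.subset_closedBall 0
  obtain ⟨β, hβ⟩ := lineSlice_closedBall hv ρ y
  exact isBounded_closedBall.subset ((Set.preimage_mono hρ).trans hβ.subset)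

lemma volume_lineSlice_chordSymm (hv : ‖v‖ = 1) {L : Set E} {c : E → ℝ}
    (hc : ∀ y t, c (setHeight v y t) = c y) (hL : Bornology.IsBounded L) (y : E) :
    volume (lineSlice v (chordSymm v c L) y) = volume (lineSlice v L y) := by
  rw [lineSlice_chordSymm hv hc, Real.volume_ball, mul_div_cancel₀ _ two_ne_zero, chordLength,
    ofReal_measureReal (isBounded_lineSlice hv hL y).measure_lt_top.ne]

lemma chordSymm_zero_subset_closedBall (hv : ‖v‖ = 1) {L : Set E} {R : ℝ}
    (hL : L ⊆ closedBall 0 R) :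
    chordSymm v 0 L ⊆ closedBall 0 R := by
  intro y hy
  obtain ⟨β, hβ⟩ := lineSlice_closedBall hv R y
  have hsub : lineSlice v L y ⊆ closedBall 0 β := (Set.preimage_mono hL).trans hβ.subset
  have hβ0 : 0 ≤ β := by
    by_contra! h
    rw [closedBall_eq_empty.2 h, Set.subset_empty_iff] at hsub
    simpa [chordLength, hsub] using pos_of_mem_ball hy
  have hlen : chordLength v L y ≤ 2 * β := by
    rw [chordLength, ← Real.volume_real_closedBall hβ0]
    exact measureReal_mono hsub measure_closedBall_lt_top.ne
  rw [← setHeight_inner v y]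
  change inner ℝ v y ∈ lineSlice v (closedBall 0 R) y
  rw [hβ]
  exact ball_subset_closedBall.trans (closedBall_subset_closedBall (by linarith)) hy

section Measurability

variable [MeasurableSpace E] [BorelSpace E] {L : Set E}

lemma measurableSet_lineSlice (v : E) (hL : MeasurableSet L) (y : E) :
    MeasurableSet (lineSlice v L y) :=
  hL.preimage (f := setHeight v y) (by unfold setHeight; fun_prop)

lemma measurable_chordLength (v : E) (hL : MeasurableSet L) : Measurable (chordLength v L) :=
  (measurable_measure_prodMk_left (hL.preimage (continuous_setHeight v).measurable)).ennreal_toReal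

lemma measurable_chordMean (v : E) (hL : MeasurableSet L) : Measurable (chordMean v L) := by
  have hmeas : MeasurableSet {p : E × ℝ | setHeight v p.1 p.2 ∈ L} :=
    hL.preimage (continuous_setHeight v).measurable
  have hint : Measurable fun y => ∫ t in lineSlice v L y, t := by
    simp_rw [← integral_indicator (measurableSet_lineSlice v hL _)]
    exact (StronglyMeasurable.integral_prod_right
      (f := fun y t => (lineSlice v L y).indicator (fun t => t) t)
      (measurable_snd.indicator hmeas).stronglyMeasurable).measurable
  unfold chordMean
  simp_rw [setAverage_eq]
  exact (measurable_chordLength v hL).inv.smul hint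

lemma measurableSet_chordSymm {c : E → ℝ} (hc : Measurable c) (hL : MeasurableSet L) :
    MeasurableSet (chordSymm v c L) :=
  measurableSet_lt (by fun_prop) ((measurable_chordLength v hL).div_const 2)

lemma lintegral_indicator_setHeight {A : Set E} (hA : MeasurableSet A) (y : E) :
    ∫⁻ t, A.indicator 1 (setHeight v y t) = volume (lineSlice v A y) := by
  rw [← lintegral_indicator_one (measurableSet_lineSlice v hA y)]
  rfl

variable [FiniteDimensional ℝ E]

lemma lintegral_le_of_forall_setHeight_le (hv : ‖v‖ = 1) {f g : E → ℝ≥0∞} (hf : Measurable f)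
    (hg : Measurable g)
    (h : ∀ y, ∫⁻ t, f (setHeight v y t) ≤ ∫⁻ t, g (setHeight v y t)) :
    ∫⁻ x, f x ≤ ∫⁻ x, g x := by
  have hv0 : v ≠ 0 := norm_ne_zero_iff.1 (hv.trans_ne one_ne_zero)
  refine lintegral_le_of_forall_line_le hv0 hf hg fun y => ?_
  have hline (f : E → ℝ≥0∞) : ∫⁻ t : ℝ, f (y + t • v) = ∫⁻ t, f (setHeight v y t) :=
    (lintegral_sub_right_eq_self (fun t : ℝ => f (y + t • v)) (inner ℝ v y)).symm
  simpa only [hline] using h y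

lemma volume_eq_of_forall_lineSlice_eq (hv : ‖v‖ = 1) {A B : Set E} (hA : MeasurableSet A)
    (hB : MeasurableSet B) (h : ∀ y, volume (lineSlice v A y) = volume (lineSlice v B y)) :
    volume A = volume B := by
  have hle {A B : Set E} (hA : MeasurableSet A) (hB : MeasurableSet B)
      (h : ∀ y, volume (lineSlice v A y) ≤ volume (lineSlice v B y)) : volume A ≤ volume B := by
    rw [← lintegral_indicator_one hA, ← lintegral_indicator_one hB]
    refine lintegral_le_of_forall_setHeight_le hv (measurable_one.indicator hA)
      (measurable_one.indicator hB) fun y => ?_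
    simpa only [lintegral_indicator_setHeight, hA, hB] using h y
  exact le_antisymm (hle hA hB fun y => (h y).le) (hle hB hA fun y => (h y).ge)

lemma volume_chordSymm (hv : ‖v‖ = 1) {c : E → ℝ} (hcm : Measurable c)
    (hc : ∀ y t, c (setHeight v y t) = c y) (hLm : MeasurableSet L) (hL : Bornology.IsBounded L) :
    volume (chordSymm v c L) = volume L :=
  volume_eq_of_forall_lineSlice_eq hv (measurableSet_chordSymm hcm hLm) hLm
    fun y => volume_lineSlice_chordSymm hv hc hL y

lemma volume_chordSymm_zero_sdiff_add_le (hv : ‖v‖ = 1) (hLm : MeasurableSet L)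
    (hL : Bornology.IsBounded L) (ρ r : ℝ) :
    volume (chordSymm v 0 L \ closedBall 0 ρ) +
        volume ((closedBall 0 ρ \ L) ∩ (· + r • v) ⁻¹' (L \ closedBall 0 ρ)) ≤
      volume (L \ closedBall 0 ρ) := by
  set D : Set E := closedBall 0 ρ
  have hD : MeasurableSet D := measurableSet_closedBall
  have hS : MeasurableSet (chordSymm v 0 L \ D) :=
    (measurableSet_chordSymm measurable_zero hLm).diff hD
  have hQ : MeasurableSet ((D \ L) ∩ (· + r • v) ⁻¹' (L \ D)) :=
    (hD.diff hLm).inter ((hLm.diff hD).preimage (measurable_add_const _))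
  rw [← lintegral_indicator_one hS, ← lintegral_indicator_one hQ,
    ← lintegral_indicator_one (hLm.diff hD), ← lintegral_add_left (measurable_one.indicator hS)]
  refine lintegral_le_of_forall_setHeight_le hv
    ((measurable_one.indicator hS).add (measurable_one.indicator hQ))
    (measurable_one.indicator (hLm.diff hD)) fun y => ?_
  rw [lintegral_add_left (f := fun t => (chordSymm v 0 L \ D).indicator 1 (setHeight v y t))
      ((measurable_one.indicator hS).comp (by unfold setHeight; fun_prop)),
    lintegral_indicator_setHeight hS, lintegral_indicator_setHeight hQ,
    lintegral_indicator_setHeight (hLm.diff hD)]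
  have hsdiff (A B : Set E) : lineSlice v (A \ B) y = lineSlice v A y \ lineSlice v B y := rfl
  rw [hsdiff (chordSymm v 0 L), hsdiff L]
  obtain ⟨β, hβ⟩ := lineSlice_closedBall hv ρ y
  refine measure_sdiff_add_le (measurableSet_lineSlice v hLm y) (measurableSet_lineSlice v hD y)
    (volume_lineSlice_chordSymm hv (fun _ _ => rfl) hL y)
    (isBounded_lineSlice hv hL y).measure_lt_top.ne ?_ Set.inter_subset_left ?_
  · rw [hβ, lineSlice_chordSymm hv (fun _ _ => rfl)]
    exact (le_or_gt (chordLength v L y / 2) β).imp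
      (fun h => ball_subset_closedBall.trans (closedBall_subset_closedBall h))
      (fun h => closedBall_subset_ball h)
  · rw [← measure_preimage_add_right volume r (lineSlice v L y \ lineSlice v D y)]
    refine measure_mono fun t ht => ?_
    have htr : setHeight v y (t + r) ∈ L \ D := by rw [setHeight_add]; exact ht.2
    exact htr

end Measurability

end ChordSymmetrization

section Multilinear

variable {ι F : Type*} [Fintype ι] [NormedAddCommGroup F] [NormedSpace ℝ F]

lemma continuous_basis_det [DecidableEq ι] [FiniteDimensional ℝ F] (b : Module.Basis ι ℝ F) :
    Continuous b.det := by
  have (i j : ι) : Continuous fun x : ι → F => b.coord i (x j) :=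
    (b.coord i).continuous_of_finiteDimensional.comp (continuous_apply j)
  exact Continuous.matrix_det (continuous_matrix this)

lemma two_mul_enorm_basis_det_le [DecidableEq ι] [FiniteDimensional ℝ F] (b : Module.Basis ι ℝ F)
    (x : ι → F) (s : ι → ℝ) (v : F) :
    2 * ‖b.det x‖ₑ ≤ ‖b.det fun i => x i + s i • v‖ₑ + ‖b.det fun i => x i - s i • v‖ₑ := by
  obtain hx | hx := eq_or_ne (b.det x) 0
  · simp [hx]
  obtain ⟨hli, hspan⟩ := b.is_basis_iff_det.2 hx.isUnit
  set b' := Module.Basis.mk hli hspan.ge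
  set ℓ : F →ₗ[ℝ] ℝ := b'.constr ℝ s
  have hℓ (i : ι) : ℓ (x i) = s i := by
    have := b'.constr_basis ℝ s i
    rwa [Module.Basis.mk_apply] at this
  have hdet (ε : ℝ) : b.det (fun i => x i + (ε * s i) • v) = (1 + ε * ℓ v) * b.det x := by
    have := b.det_comp (LinearMap.transvection (ε • ℓ) v) x
    rw [LinearMap.transvection.det] at this
    simpa [Function.comp_def, LinearMap.transvection.apply, hℓ] using this
  have hadd := hdet 1
  have hsub := hdet (-1)
  simp only [one_mul, neg_mul, neg_smul, ← sub_eq_add_neg] at hadd hsub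
  rw [hadd, hsub, enorm_mul, enorm_mul, ← add_mul]
  gcongr
  calc (2 : ℝ≥0∞) = ‖(1 + ℓ v) + (1 - ℓ v)‖ₑ := by
        rw [add_add_sub_cancel, one_add_one_eq_two, Real.enorm_eq_ofReal zero_le_two,
          ENNReal.ofReal_ofNat]
    _ ≤ ‖1 + ℓ v‖ₑ + ‖1 - ℓ v‖ₑ := enorm_add_le _ _

variable [MeasurableSpace F] {μ : Measure F} [SigmaFinite μ]

lemma setLIntegral_enorm_multilinear_update_le [DecidableEq ι]
    {D : MultilinearMap ℝ (fun _ : ι => F) ℝ} (hD : Measurable D) {B : ι → Set F}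
    (hB : ∀ j, MeasurableSet (B j)) {A A' : Set F} (hA : MeasurableSet A) (hA' : MeasurableSet A')
    (h : ∀ f : F →ₗ[ℝ] ℝ, ∫⁻ x in A', ‖f x‖ₑ ∂μ ≤ ∫⁻ x in A, ‖f x‖ₑ ∂μ) (i : ι) :
    ∫⁻ x in Set.univ.pi (Function.update B i A'), ‖D x‖ₑ ∂Measure.pi (fun _ => μ) ≤
      ∫⁻ x in Set.univ.pi (Function.update B i A), ‖D x‖ₑ ∂Measure.pi (fun _ => μ) := by
  have hmeas {C : Set F} (hC : MeasurableSet C) :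
      MeasurableSet (Set.univ.pi (Function.update B i C)) :=
    .univ_pi <| (Function.forall_update_iff B fun _ S => MeasurableSet S).2 ⟨hC, fun j _ => hB j⟩
  rw [← lintegral_indicator (hmeas hA'), ← lintegral_indicator (hmeas hA)]
  refine lintegral_le_of_lmarginal_le {i} (hD.enorm.indicator (hmeas hA'))
    (hD.enorm.indicator (hmeas hA)) fun x => ?_
  simp only [lmarginal_singleton]
  have hmem (C : Set F) (y : F) : Function.update x i y ∈ Set.univ.pi (Function.update B i C) ↔
      y ∈ C ∧ ∀ j ≠ i, x j ∈ B j := by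
    rw [Set.mem_univ_pi, Function.forall_update_iff _ fun j z => z ∈ Function.update B i C j,
      Function.update_self]
    exact and_congr_right' (forall₂_congr fun j hj => by rw [Function.update_of_ne hj])
  by_cases hx : ∀ j ≠ i, x j ∈ B j
  · have hslice {C : Set F} (hC : MeasurableSet C) :
        ∫⁻ y, (Set.univ.pi (Function.update B i C)).indicator (fun x => ‖D x‖ₑ)
          (Function.update x i y) ∂μ = ∫⁻ y in C, ‖D.toLinearMap x i y‖ₑ ∂μ := by
      classical
      rw [← lintegral_indicator hC]
      refine lintegral_congr fun y => ?_
      simp only [Set.indicator_apply, (hmem C y).trans (and_iff_left hx),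
        MultilinearMap.toLinearMap_apply]
    rw [hslice hA, hslice hA']
    exact h _
  · simp [Set.indicator_of_notMem, hmem, hx]

lemma setLIntegral_enorm_multilinear_le {D : MultilinearMap ℝ (fun _ : ι => F) ℝ}
    (hD : Measurable D) {A A' : Set F} (hA : MeasurableSet A) (hA' : MeasurableSet A')
    (h : ∀ f : F →ₗ[ℝ] ℝ, ∫⁻ x in A', ‖f x‖ₑ ∂μ ≤ ∫⁻ x in A, ‖f x‖ₑ ∂μ) :
    ∫⁻ x in Set.univ.pi fun _ => A', ‖D x‖ₑ ∂Measure.pi (fun _ => μ) ≤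
      ∫⁻ x in Set.univ.pi fun _ => A, ‖D x‖ₑ ∂Measure.pi (fun _ => μ) := by
  classical
  have key (s : Finset ι) :
      ∫⁻ x in Set.univ.pi (s.piecewise (fun _ => A') fun _ => A), ‖D x‖ₑ
          ∂Measure.pi (fun _ => μ) ≤
        ∫⁻ x in Set.univ.pi fun _ => A, ‖D x‖ₑ ∂Measure.pi (fun _ => μ) := by
    induction s using Finset.induction_on with
    | empty => simp
    | insert i s hi ih =>
      rw [Finset.piecewise_insert]
      refine (setLIntegral_enorm_multilinear_update_le hD (fun j => ?_) hA hA' h i).trans ?_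
      · by_cases hj : j ∈ s <;> simp [hj, hA, hA']
      · rwa [Function.update_eq_self_iff.2 (s.piecewise_eq_of_notMem _ _ hi).symm]
  simpa using key Finset.univ

end Multilinear

section LinearMap

variable {F : Type*} [NormedAddCommGroup F] [NormedSpace ℝ F] [FiniteDimensional ℝ F]
  [MeasurableSpace F] [BorelSpace F] (μ : Measure F) [μ.IsAddHaarMeasure]

lemma enorm_det_mul_setLIntegral_preimage_linearMap {f : F →ₗ[ℝ] F} (hf : LinearMap.det f ≠ 0)
    {s : Set F} (hs : MeasurableSet s) {g : F → ℝ≥0∞} (hg : Measurable g) :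
    ‖LinearMap.det f‖ₑ * ∫⁻ x in f ⁻¹' s, g (f x) ∂μ = ∫⁻ x in s, g x ∂μ := by
  have hfm : Measurable f := f.continuous_of_finiteDimensional.measurable
  rw [← setLIntegral_map hs hg hfm, Measure.map_linearMap_addHaar_eq_smul_addHaar μ hf,
    Measure.restrict_smul, lintegral_smul_measure, smul_eq_mul, ← mul_assoc,
    ← Real.enorm_eq_ofReal_abs, ← enorm_mul, mul_inv_cancel₀ hf, enorm_one, one_mul]

end LinearMap

section Shear

variable {E : Type*} [NormedAddCommGroup E] [InnerProductSpace ℝ E] {v : E}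

lemma reflection_eq_setHeight (hv : ‖v‖ = 1) (y : E) :
    (ℝ ∙ v)ᗮ.reflection y = setHeight v y (-inner ℝ v y) := by
  rw [Submodule.reflection_orthogonal_apply, Submodule.reflection_singleton_apply, setHeight]
  simp only [hv]
  module

lemma reflection_preimage_chordSymm (hv : ‖v‖ = 1) {c : E → ℝ}
    (hc : ∀ y t, c (setHeight v y t) = c y) (L : Set E) :
    (ℝ ∙ v)ᗮ.reflection ⁻¹' chordSymm v c L = chordSymm v (-c) L := by
  ext y
  rw [Set.mem_preimage, reflection_eq_setHeight hv]
  simp only [chordSymm, chordLength, Set.mem_ofPred_eq, mem_ball, inner_setHeight hv, hc,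
    lineSlice_setHeight hv, Pi.neg_apply, Real.dist_eq, sub_neg_eq_add]
  rw [← abs_neg, neg_sub, sub_neg_eq_add, add_comm]

lemma shear_preimage_chordSymm (hv : ‖v‖ = 1) {c : E → ℝ}
    (hc : ∀ y t, c (setHeight v y t) = c y) (L : Set E) :
    (fun y => y + c y • v) ⁻¹' chordSymm v c L = chordSymm v 0 L := by
  ext y
  have hy : y + c y • v = setHeight v y (inner ℝ v y + c y) := by
    rw [setHeight_add, setHeight_inner]
  simp only [chordSymm, chordLength, Set.mem_preimage, Set.mem_ofPred_eq, mem_ball, hy,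
    inner_setHeight hv, hc, lineSlice_setHeight hv, Pi.zero_apply, Real.dist_eq,
    add_sub_cancel_right, sub_zero]

variable [FiniteDimensional ℝ E] [MeasurableSpace E] [BorelSpace E]

lemma measurePreserving_shear (hv : ‖v‖ = 1) {c : E → ℝ} (hcm : Measurable c)
    (hc : ∀ y t, c (setHeight v y t) = c y) :
    MeasurePreserving fun y => y + c y • v := by
  have hm : Measurable fun y => y + c y • v := by fun_prop
  refine ⟨hm, Measure.ext fun A hA => ?_⟩
  rw [Measure.map_apply hm hA]
  refine volume_eq_of_forall_lineSlice_eq hv (hm hA) hA fun y => ?_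
  have : lineSlice v ((fun y => y + c y • v) ⁻¹' A) y = (· + c y) ⁻¹' lineSlice v A y := by
    ext t
    simp only [lineSlice, Set.mem_preimage, hc, setHeight_add]
  rw [this, measure_preimage_add_right]

end Shear

section SimplexMoment

variable {ι E : Type*} [Fintype ι] [DecidableEq ι] [NormedAddCommGroup E] [InnerProductSpace ℝ E]
  [FiniteDimensional ℝ E] [MeasurableSpace E] [BorelSpace E]

/-- The unnormalized mean volume, up to a constant factor, of the simplex spanned by the origin and
independent random points of `L`, one for each vector of the basis `b`. -/
def simplexMoment (b : Module.Basis ι ℝ E) (L : Set E) : ℝ≥0∞ :=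
  ∫⁻ x in Set.univ.pi fun _ : ι => L, ‖b.det x‖ₑ

variable {v : E} {L : Set E}

lemma simplexMoment_chordSymm_chordMean_le (b : Module.Basis ι ℝ E) (hv : ‖v‖ = 1)
    (hLm : MeasurableSet L) (hL : Bornology.IsBounded L) :
    simplexMoment b (chordSymm v (chordMean v L) L) ≤ simplexMoment b L := by
  have hSm : MeasurableSet (chordSymm v (chordMean v L) L) :=
    measurableSet_chordSymm (measurable_chordMean v hLm) hLm
  refine setLIntegral_enorm_multilinear_le (D := b.det.toMultilinearMap)
    (continuous_basis_det b).measurable hLm hSm fun f => ?_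
  have hf : Measurable fun x => ‖f x‖ₑ := f.continuous_of_finiteDimensional.measurable.enorm
  have hslice {A : Set E} (hA : MeasurableSet A) (y : E) :
      ∫⁻ t, A.indicator (fun x => ‖f x‖ₑ) (setHeight v y t) =
        ∫⁻ t in lineSlice v A y, ‖f v * t + (f y - inner ℝ v y * f v)‖ₑ := by
    rw [← lintegral_indicator (measurableSet_lineSlice v hA y)]
    refine lintegral_congr fun t => ?_
    have : f (setHeight v y t) = f v * t + (f y - inner ℝ v y * f v) := by
      simp only [setHeight, map_add, map_smul, smul_eq_mul]
      ring
    classical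
    simp only [Set.indicator_apply, lineSlice, Set.mem_preimage, this]
  rw [← lintegral_indicator hSm, ← lintegral_indicator hLm]
  refine lintegral_le_of_forall_setHeight_le hv (hf.indicator hSm) (hf.indicator hLm) fun y => ?_
  rw [hslice hSm, hslice hLm, lineSlice_chordSymm hv (chordMean_setHeight hv L)]
  exact setLIntegral_ball_setAverage_enorm_le _ _ (measurableSet_lineSlice v hLm y)
    (isBounded_lineSlice hv hL y)

lemma simplexMoment_preimage_linearMap (b : Module.Basis ι ℝ E) {f : E →ₗ[ℝ] E}
    (hf : LinearMap.det f ≠ 0) (hL : MeasurableSet L) :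
    ‖LinearMap.det f‖ₑ ^ (Fintype.card ι + 1) * simplexMoment b (f ⁻¹' L) = simplexMoment b L := by
  set F : (ι → E) →ₗ[ℝ] (ι → E) := LinearMap.pi fun i => f ∘ₗ LinearMap.proj i
  have hdet : LinearMap.det F = LinearMap.det f ^ Fintype.card ι := by
    simp [F, LinearMap.det_pi]
  have hF : LinearMap.det F ≠ 0 := hdet ▸ pow_ne_zero _ hf
  have hbF (x : ι → E) : ‖b.det (F x)‖ₑ = ‖LinearMap.det f‖ₑ * ‖b.det x‖ₑ := by
    rw [← enorm_mul, ← b.det_comp]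
    rfl
  have := enorm_det_mul_setLIntegral_preimage_linearMap volume hF
    (MeasurableSet.univ_pi fun _ : ι => hL) (continuous_basis_det b).measurable.enorm
  simp only [hbF] at this
  rwa [lintegral_const_mul _ (continuous_basis_det b).measurable.enorm, hdet, enorm_pow,
    ← mul_assoc, ← pow_succ] at this

lemma simplexMoment_chordSymm (b : Module.Basis ι ℝ E) (hv : ‖v‖ = 1)
    (hL : MeasurableSet L) {c : E → ℝ} (hcm : Measurable c)
    (hc : ∀ y t, c (setHeight v y t) = c y) :
    simplexMoment b (chordSymm v c L) =
      ∫⁻ x in Set.univ.pi fun _ : ι => chordSymm v 0 L, ‖b.det fun i => x i + c (x i) • v‖ₑ := by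
  have hpi := measurePreserving_pi (fun _ : ι => (volume : Measure E)) (fun _ => volume)
    fun _ => measurePreserving_shear hv hcm hc
  rw [simplexMoment, ← shear_preimage_chordSymm hv hc]
  exact (hpi.setLIntegral_comp_preimage (.univ_pi fun _ => measurableSet_chordSymm hcm hL)
    (continuous_basis_det b).measurable.enorm).symm

lemma simplexMoment_chordSymm_neg (b : Module.Basis ι ℝ E) (hv : ‖v‖ = 1)
    (hL : MeasurableSet L) {c : E → ℝ} (hcm : Measurable c)
    (hc : ∀ y t, c (setHeight v y t) = c y) :
    simplexMoment b (chordSymm v (-c) L) = simplexMoment b (chordSymm v c L) := by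
  have hdet : ‖LinearMap.det (ℝ ∙ v)ᗮ.reflection.toLinearMap‖ₑ = 1 := by
    rw [Submodule.det_reflection, enorm_pow, enorm_neg, enorm_one, one_pow]
  have hσ : LinearMap.det (ℝ ∙ v)ᗮ.reflection.toLinearMap ≠ 0 :=
    enorm_ne_zero.1 (hdet ▸ one_ne_zero)
  have := simplexMoment_preimage_linearMap b hσ (measurableSet_chordSymm (v := v) hcm hL)
  rw [hdet, one_pow, one_mul] at this
  rw [← this, ← reflection_preimage_chordSymm hv hc]
  rfl

lemma simplexMoment_chordSymm_zero_le (b : Module.Basis ι ℝ E) (hv : ‖v‖ = 1)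
    (hL : MeasurableSet L) {c : E → ℝ} (hcm : Measurable c)
    (hc : ∀ y t, c (setHeight v y t) = c y) :
    simplexMoment b (chordSymm v 0 L) ≤ simplexMoment b (chordSymm v c L) := by
  have hdet := (continuous_basis_det b).measurable.enorm
  have hadd := simplexMoment_chordSymm b hv hL hcm hc
  have hsub := simplexMoment_chordSymm b hv hL hcm.neg fun y t => congrArg Neg.neg (hc y t)
  rw [simplexMoment_chordSymm_neg b hv hL hcm hc] at hsub
  simp only [Pi.neg_apply, neg_smul, ← sub_eq_add_neg] at hsub
  set S := Set.univ.pi fun _ : ι => chordSymm v 0 L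
  have h2 : 2 * simplexMoment b (chordSymm v 0 L) ≤ 2 * simplexMoment b (chordSymm v c L) :=
    calc 2 * simplexMoment b (chordSymm v 0 L)
        = ∫⁻ x in S, 2 * ‖b.det x‖ₑ := (lintegral_const_mul _ hdet).symm
      _ ≤ ∫⁻ x in S, (‖b.det fun i => x i + c (x i) • v‖ₑ + ‖b.det fun i => x i - c (x i) • v‖ₑ) :=
          lintegral_mono fun x => two_mul_enorm_basis_det_le b x _ v
      _ = 2 * simplexMoment b (chordSymm v c L) := by
          rw [lintegral_add_left, ← hadd, ← hsub, two_mul]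
          exact hdet.comp (measurable_pi_lambda _ fun i => by fun_prop)
  exact (ENNReal.mul_le_mul_iff_right two_ne_zero ENNReal.ofNat_ne_top).1 h2

lemma simplexMoment_chordSymm_zero_le_self (b : Module.Basis ι ℝ E) (hv : ‖v‖ = 1)
    (hLm : MeasurableSet L) (hL : Bornology.IsBounded L) :
    simplexMoment b (chordSymm v 0 L) ≤ simplexMoment b L :=
  (simplexMoment_chordSymm_zero_le b hv hLm (measurable_chordMean v hLm)
    (chordMean_setHeight hv L)).trans (simplexMoment_chordSymm_chordMean_le b hv hLm hL)

end SimplexMoment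

section MeasureLemmas

lemma measure_univ_pi_sdiff_le {ι F : Type*} [Fintype ι] [MeasurableSpace F]
    (μ : Measure F) [SigmaFinite μ] (B L : Set F) :
    Measure.pi (fun _ : ι => μ) ((Set.univ.pi fun _ => B) \ Set.univ.pi fun _ => L) ≤
      Fintype.card ι * μ B ^ (Fintype.card ι - 1) * μ (B \ L) := by
  classical
  have hsub : (Set.univ.pi fun _ : ι => B) \ (Set.univ.pi fun _ => L) ⊆
      ⋃ i, Set.univ.pi (Function.update (fun _ => B) i (B \ L)) := by
    intro x ⟨hxB, hxL⟩
    simp only [Set.mem_univ_pi, not_forall] at hxB hxL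
    obtain ⟨i, hi⟩ := hxL
    rw [Set.mem_iUnion]
    exact ⟨i, Set.mem_univ_pi.2 ((Function.forall_update_iff _ fun j S => x j ∈ S).2
      ⟨⟨hxB i, hi⟩, fun j _ => hxB j⟩)⟩
  have hpi (i : ι) : Measure.pi (fun _ : ι => μ)
      (Set.univ.pi (Function.update (fun _ => B) i (B \ L))) =
        μ (B \ L) * μ B ^ (Fintype.card ι - 1) := by
    rw [Measure.pi_pi, ← Finset.mul_prod_erase _ _ (Finset.mem_univ i), Function.update_self,
      Finset.prod_congr rfl fun j hj => by rw [Function.update_of_ne (Finset.ne_of_mem_erase hj)],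
      Finset.prod_const, Finset.card_erase_of_mem (Finset.mem_univ i), Finset.card_univ]
  calc _ ≤ _ := measure_mono hsub
    _ ≤ ∑ i : ι, _ := measure_iUnion_fintype_le _ _
    _ = _ := by simp only [hpi, Finset.sum_const, Finset.card_univ, nsmul_eq_mul]; ring

lemma lintegral_measure_inter_preimage_add {G : Type*} [AddGroup G] [MeasurableSpace G]
    [MeasurableAdd₂ G] (μ : Measure G) [SFinite μ] [μ.IsAddLeftInvariant] {A A' : Set G}
    (hA : MeasurableSet A) (hA' : MeasurableSet A') :
    ∫⁻ v, μ (A ∩ (· + v) ⁻¹' A') ∂μ = μ A * μ A' := by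
  have hmp := measurePreserving_prod_add μ μ
  rw [← Measure.prod_prod, ← hmp.measure_preimage (hA.prod hA').nullMeasurableSet,
    Measure.prod_apply_symm (hmp.measurable (hA.prod hA'))]
  rfl

variable {F : Type*} [NormedAddCommGroup F] [MeasurableSpace F] [BorelSpace F]
  [SecondCountableTopology F] (μ : Measure F) [SFinite μ] [μ.IsAddLeftInvariant]

lemma measure_sdiff_closedBall_sq_le {L : Set F} {R ρ : ℝ} {η : ℝ≥0∞} (hL : MeasurableSet L)
    (hLR : L ⊆ closedBall 0 R) (hρ : μ (closedBall 0 ρ) ≠ ∞) (hvol : μ L = μ (closedBall 0 ρ))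
    (h : ∀ v, μ ((closedBall 0 ρ \ L) ∩ (· + v) ⁻¹' (L \ closedBall 0 ρ)) ≤ η) :
    μ (L \ closedBall 0 ρ) ^ 2 ≤ η * μ (closedBall 0 (R + ρ)) := by
  have hB : MeasurableSet (closedBall (0 : F) ρ) := measurableSet_closedBall
  have hsymm : μ (L \ closedBall 0 ρ) = μ (closedBall 0 ρ \ L) :=
    measure_sdiff_symm hL.nullMeasurableSet hB.nullMeasurableSet hvol
      (measure_ne_top_of_subset Set.inter_subset_right hρ)
  calc μ (L \ closedBall 0 ρ) ^ 2
      = ∫⁻ v, μ ((closedBall 0 ρ \ L) ∩ (· + v) ⁻¹' (L \ closedBall 0 ρ)) ∂μ := by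
        rw [lintegral_measure_inter_preimage_add μ (hB.diff hL) (hL.diff hB), ← hsymm, sq]
    _ ≤ ∫⁻ v, (closedBall 0 (R + ρ)).indicator (fun _ => η) v ∂μ := by
        refine lintegral_mono fun v => ?_
        obtain hv | hv := em (v ∈ closedBall 0 (R + ρ))
        · rw [Set.indicator_of_mem hv]
          exact h v
        · have : (closedBall 0 ρ \ L) ∩ (· + v) ⁻¹' (L \ closedBall 0 ρ) = ∅ := by
            refine Set.eq_empty_of_forall_notMem fun x ⟨⟨hx, _⟩, hxv, _⟩ => hv ?_
            rw [mem_closedBall_zero_iff] at hx ⊢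
            have hxv' := mem_closedBall_zero_iff.1 (hLR hxv)
            calc ‖v‖ = ‖(x + v) - x‖ := by rw [add_sub_cancel_left]
              _ ≤ ‖x + v‖ + ‖x‖ := norm_sub_le _ _
              _ ≤ R + ρ := add_le_add hxv' hx
          rw [this, measure_empty]
          exact zero_le
    _ = η * μ (closedBall 0 (R + ρ)) := lintegral_indicator_const measurableSet_closedBall η

end MeasureLemmas

section RandomSimplex

variable {ι E : Type*} [Fintype ι] [DecidableEq ι] [NormedAddCommGroup E] [InnerProductSpace ℝ E]
  [FiniteDimensional ℝ E] (b : Module.Basis ι ℝ E) {L : Set E}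

lemma exists_enorm_basis_det_le (R : ℝ) :
    ∃ C : ℝ≥0, ∀ x ∈ Set.univ.pi fun _ : ι => closedBall (0 : E) R, ‖b.det x‖ₑ ≤ C := by
  obtain ⟨C, hC⟩ := (isCompact_univ_pi fun _ : ι => isCompact_closedBall (0 : E) R)
    |>.exists_bound_of_continuousOn (continuous_basis_det b).continuousOn
  exact ⟨C.toNNReal, fun x hx => enorm_le_coe.2 (NNReal.le_toNNReal_of_coe_le (hC x hx))⟩

variable [MeasurableSpace E] [BorelSpace E]

lemma simplexMoment_lt_top (hL : Bornology.IsBounded L) : simplexMoment b L < ∞ := by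
  obtain ⟨R, hR⟩ := hL.subset_closedBall 0
  obtain ⟨C, hC⟩ := exists_enorm_basis_det_le b R
  have hfin : volume (Set.univ.pi fun _ : ι => L) < ∞ := by
    rw [volume_pi_pi]
    exact ENNReal.prod_lt_top fun _ _ => hL.measure_lt_top
  calc simplexMoment b L
      ≤ ∫⁻ _ in Set.univ.pi fun _ : ι => L, C :=
        setLIntegral_mono measurable_const fun x hx => hC x (Set.pi_mono (fun _ _ => hR) hx)
    _ = C * volume (Set.univ.pi fun _ : ι => L) := setLIntegral_const _ _
    _ < ∞ := ENNReal.mul_lt_top ENNReal.coe_lt_top hfin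

lemma simplexMoment_mono {L' : Set E} (h : L ⊆ L') : simplexMoment b L ≤ simplexMoment b L' :=
  lintegral_mono_set (Set.pi_mono fun _ _ => h)

lemma exists_simplexMoment_closedBall_le_add (ρ : ℝ) :
    ∃ C ≠ ∞, ∀ L, MeasurableSet L →
      simplexMoment b (closedBall 0 ρ) ≤ simplexMoment b L + C * volume (closedBall 0 ρ \ L) := by
  obtain ⟨C, hC⟩ := exists_enorm_basis_det_le b ρ
  set B : Set E := closedBall 0 ρ
  have hB : volume B ≠ ∞ := measure_closedBall_lt_top.ne
  refine ⟨C * (Fintype.card ι * volume B ^ (Fintype.card ι - 1)), by finiteness, fun L hL => ?_⟩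
  have hpi : MeasurableSet (Set.univ.pi fun _ : ι => L) := .univ_pi fun _ => hL
  calc simplexMoment b B
      ≤ simplexMoment b L +
          ∫⁻ x in (Set.univ.pi fun _ : ι => B) \ Set.univ.pi fun _ => L, ‖b.det x‖ₑ := by
        rw [simplexMoment, ← lintegral_inter_add_sdiff _ _ hpi]
        gcongr
        exact lintegral_mono_set Set.inter_subset_right
    _ ≤ simplexMoment b L + C * volume ((Set.univ.pi fun _ : ι => B) \ Set.univ.pi fun _ => L) := by
        rw [← setLIntegral_const]
        exact add_le_add_right (setLIntegral_mono measurable_const fun x hx => hC x hx.1) _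
    _ ≤ _ := by
        rw [mul_assoc]
        gcongr
        exact measure_univ_pi_sdiff_le volume B L

lemma exists_symmetrization_sdiff_closedBall_add_le {R : ℝ} (hLm : MeasurableSet L)
    (hLR : L ⊆ closedBall 0 R) (ρ : ℝ) (v : E) :
    ∃ L', MeasurableSet L' ∧ L' ⊆ closedBall 0 R ∧ volume L' = volume L ∧
      simplexMoment b L' ≤ simplexMoment b L ∧
      volume (L' \ closedBall 0 ρ) +
        volume ((closedBall 0 ρ \ L) ∩ (· + v) ⁻¹' (L \ closedBall 0 ρ)) ≤
          volume (L \ closedBall 0 ρ) := by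
  obtain rfl | hv0 := eq_or_ne v 0
  · refine ⟨L, hLm, hLR, rfl, le_rfl, ?_⟩
    simp only [add_zero, Set.preimage_id']
    rw [(disjoint_sdiff_sdiff).inter_eq, measure_empty, add_zero]
  have hbdd : Bornology.IsBounded L := isBounded_closedBall.subset hLR
  have hu : ‖‖v‖⁻¹ • v‖ = 1 := norm_smul_inv_norm (𝕜 := ℝ) hv0
  have hsymm := volume_chordSymm_zero_sdiff_add_le hu hLm hbdd ρ ‖v‖
  rw [smul_inv_smul₀ (norm_ne_zero_iff.2 hv0)] at hsymm
  exact ⟨chordSymm (‖v‖⁻¹ • v) 0 L, measurableSet_chordSymm measurable_zero hLm,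
    chordSymm_zero_subset_closedBall hu hLR,
    volume_chordSymm hu measurable_zero (fun _ _ => rfl) hLm hbdd,
    simplexMoment_chordSymm_zero_le_self b hu hLm hbdd, hsymm⟩

lemma exists_symmetrization_sdiff_closedBall_lt {R ρ : ℝ} (hLm : MeasurableSet L)
    (hLR : L ⊆ closedBall 0 R) (hvol : volume L = volume (closedBall (0 : E) ρ)) {ε : ℝ≥0∞}
    (hε : 0 < ε) :
    ∃ L', MeasurableSet L' ∧ volume L' = volume (closedBall (0 : E) ρ) ∧
      simplexMoment b L' ≤ simplexMoment b L ∧ volume (L' \ closedBall 0 ρ) < ε := by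
  set B : Set E := closedBall 0 ρ
  let S : Set (Set E) := {L' | MeasurableSet L' ∧ L' ⊆ closedBall 0 R ∧ volume L' = volume B ∧
    simplexMoment b L' ≤ simplexMoment b L}
  set δ := ⨅ L' ∈ S, volume (L' \ B) with hδ_def
  have hδ_le {L'} (hL' : L' ∈ S) : δ ≤ volume (L' \ B) := iInf₂_le L' hL'
  have hδ_exists {t : ℝ≥0∞} (ht : δ < t) : ∃ L' ∈ S, volume (L' \ B) < t := by
    simpa only [hδ_def, iInf_lt_iff, exists_prop] using ht
  have hδ_top : δ ≠ ∞ := ((hδ_le ⟨hLm, hLR, hvol, le_rfl⟩).trans_lt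
    (isBounded_closedBall.subset (Set.sdiff_subset.trans hLR)).measure_lt_top).ne
  suffices hδ : δ = 0 by
    obtain ⟨L', ⟨hm, -, hv, hle⟩, hlt⟩ := hδ_exists (hδ.trans_lt hε)
    exact ⟨L', hm, hv, hle, hlt⟩
  by_contra hδ
  obtain ⟨η, hη, hηlt⟩ := ENNReal.exists_nnreal_pos_mul_lt
    (measure_closedBall_lt_top (μ := volume) (x := (0 : E)) (r := R + ρ)).ne (pow_ne_zero 2 hδ)
  obtain ⟨L', ⟨hm, hR, hv, hle⟩, hlt⟩ :=
    hδ_exists (ENNReal.lt_add_right hδ_top (ENNReal.coe_ne_zero.2 hη.ne'))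
  have htransfer (v : E) : volume ((B \ L') ∩ (· + v) ⁻¹' (L' \ B)) ≤ η := by
    obtain ⟨L'', hm', hR', hv', hle', hadd⟩ :=
      exists_symmetrization_sdiff_closedBall_add_le b hm hR ρ v
    refine (ENNReal.add_le_add_iff_left hδ_top).1 ?_
    exact (add_le_add_left (hδ_le ⟨hm', hR', hv'.trans hv, hle'.trans hle⟩) _).trans
      (hadd.trans hlt.le)
  have hsq := measure_sdiff_closedBall_sq_le volume hm hR measure_closedBall_lt_top.ne hv htransfer
  exact (hηlt.trans_le ((pow_le_pow_left' (hδ_le ⟨hm, hR, hv, hle⟩) 2))).not_ge hsq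

lemma simplexMoment_closedBall_le {ρ : ℝ} (hLm : MeasurableSet L) (hL : Bornology.IsBounded L)
    (hvol : volume L = volume (closedBall (0 : E) ρ)) :
    simplexMoment b (closedBall 0 ρ) ≤ simplexMoment b L := by
  obtain ⟨R, hR⟩ := hL.subset_closedBall 0
  obtain ⟨C, hC, hcont⟩ := exists_simplexMoment_closedBall_le_add b ρ
  refine ENNReal.le_of_forall_pos_le_add fun η hη _ => ?_
  obtain ⟨ε, hε, hεC⟩ := ENNReal.exists_nnreal_pos_mul_lt hC (ENNReal.coe_ne_zero.2 hη.ne')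
  obtain ⟨L', hL'm, hL'vol, hle, hlt⟩ :=
    exists_symmetrization_sdiff_closedBall_lt b hLm hR hvol (ENNReal.coe_pos.2 hε)
  rw [measure_sdiff_symm hL'm.nullMeasurableSet measurableSet_closedBall.nullMeasurableSet hL'vol
    (measure_ne_top_of_subset Set.inter_subset_right measure_closedBall_lt_top.ne)] at hlt
  calc simplexMoment b (closedBall 0 ρ)
      ≤ simplexMoment b L' + C * volume (closedBall 0 ρ \ L') := hcont L' hL'm
    _ ≤ simplexMoment b L + C * ε := by gcongr
    _ ≤ simplexMoment b L + η := by
        rw [mul_comm]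
        gcongr

lemma simplexMoment_preimage_linearMap_mul {f : E →ₗ[ℝ] E} (hf : LinearMap.det f ≠ 0)
    (hL : MeasurableSet L) :
    simplexMoment b (f ⁻¹' L) * volume L ^ (Fintype.card ι + 1) =
      simplexMoment b L * volume (f ⁻¹' L) ^ (Fintype.card ι + 1) := by
  have hvol : ‖LinearMap.det f‖ₑ * volume (f ⁻¹' L) = volume L := by
    simpa only [Pi.one_apply, setLIntegral_one] using
      enorm_det_mul_setLIntegral_preimage_linearMap volume hf hL measurable_one
  rw [← simplexMoment_preimage_linearMap b hf hL, ← hvol]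
  ring

lemma exists_volume_closedBall_eq [Nontrivial E] {V : ℝ≥0∞} (h0 : V ≠ 0) (htop : V ≠ ∞) :
    ∃ ρ > 0, volume (closedBall (0 : E) ρ) = V := by
  set κ := volume (ball (0 : E) 1)
  have hκ0 : κ ≠ 0 := (measure_ball_pos volume 0 one_pos).ne'
  have hκ : κ ≠ ∞ := measure_ball_lt_top.ne
  have hq : 0 < (V / κ).toReal :=
    ENNReal.toReal_pos (ENNReal.div_ne_zero.2 ⟨h0, hκ⟩) (ENNReal.div_ne_top htop hκ0)
  refine ⟨(V / κ).toReal ^ (Module.finrank ℝ E : ℝ)⁻¹, Real.rpow_pos_of_pos hq _, ?_⟩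
  rw [Measure.addHaar_closedBall _ _ (by positivity),
    Real.rpow_inv_natCast_pow hq.le Module.finrank_pos.ne',
    ENNReal.ofReal_toReal (ENNReal.div_ne_top htop hκ0), ENNReal.div_mul_cancel hκ0 hκ]

lemma simplexMoment_closedBall_mul_le_of_isBounded [Nontrivial E] (hLm : MeasurableSet L)
    (hL : Bornology.IsBounded L) :
    simplexMoment b (closedBall 0 1) * volume L ^ (Fintype.card ι + 1) ≤
      volume (closedBall (0 : E) 1) ^ (Fintype.card ι + 1) * simplexMoment b L := by
  obtain h0 | h0 := eq_or_ne (volume L) 0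
  · simp [h0]
  obtain ⟨ρ, hρ, hvol⟩ := exists_volume_closedBall_eq (E := E) h0 hL.measure_lt_top.ne
  set f : E →ₗ[ℝ] E := ρ⁻¹ • LinearMap.id
  have hf : LinearMap.det f ≠ 0 := by
    rw [LinearMap.det_smul, LinearMap.det_id]
    positivity
  have hball : f ⁻¹' closedBall 0 1 = closedBall 0 ρ := by
    ext x
    rw [Set.mem_preimage, mem_closedBall_zero_iff, mem_closedBall_zero_iff, LinearMap.smul_apply,
      LinearMap.id_apply, norm_smul, norm_inv, Real.norm_of_nonneg hρ.le, inv_mul_le_one₀ hρ]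
  have hscale :=
    simplexMoment_preimage_linearMap_mul b hf (L := closedBall 0 1) measurableSet_closedBall
  rw [hball, hvol] at hscale
  rw [← hscale, mul_comm]
  gcongr
  exact simplexMoment_closedBall_le b hLm hL hvol.symm

/-- **Busemann's random simplex inequality**. -/
theorem simplexMoment_closedBall_mul_le [Nontrivial E] (hL : MeasurableSet L) :
    simplexMoment b (closedBall 0 1) * volume L ^ (Fintype.card ι + 1) ≤
      volume (closedBall (0 : E) 1) ^ (Fintype.card ι + 1) * simplexMoment b L := by
  have hmono : Monotone fun j : ℕ => L ∩ closedBall 0 (j : ℝ) := fun i j hij =>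
    Set.inter_subset_inter_right _ (closedBall_subset_closedBall (Nat.cast_le.2 hij))
  have hU : ⋃ j : ℕ, L ∩ closedBall 0 (j : ℝ) = L := by
    rw [← Set.inter_iUnion, iUnion_closedBall_nat, Set.inter_univ]
  have hlim := tendsto_measure_iUnion_atTop (μ := volume) hmono
  rw [hU] at hlim
  have hlim' := ENNReal.Tendsto.const_mul (ENNReal.Tendsto.pow (n := Fintype.card ι + 1) hlim)
    (.inr (simplexMoment_lt_top b (isBounded_closedBall (x := (0 : E)) (r := 1))).ne)
  refine le_of_tendsto' hlim' fun j => ?_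
  refine (simplexMoment_closedBall_mul_le_of_isBounded b (hL.inter measurableSet_closedBall)
    (isBounded_closedBall.subset Set.inter_subset_right)).trans ?_
  gcongr
  exact simplexMoment_mono b Set.inter_subset_left

end RandomSimplex

section LinearSystem

variable {ι F : Type*} [Fintype ι] [DecidableEq ι]

lemma ae_basis_det_ne_zero [NormedAddCommGroup F] [NormedSpace ℝ F] [Nontrivial F]
    [MeasureSpace F] [BorelSpace F] [FiniteDimensional ℝ F]
    [(volume : Measure F).IsAddHaarMeasure] (b : Module.Basis ι ℝ F) :
    ∀ᵐ x : ι → F, b.det x ≠ 0 := by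
  have hZ : MeasurableSet {x : ι → F | b.det x = 0} :=
    (isClosed_singleton.preimage (continuous_basis_det b)).measurableSet
  have hroots (x : ι → F) : {s : ℝ | b.det (x + s • ⇑b) = 0}.Finite := by
    refine (((-b.toMatrix x).charpoly.roots).toFinset.finite_toSet).subset fun s hs => ?_
    rw [Finset.mem_coe, Multiset.mem_toFinset,
      Polynomial.mem_roots (Matrix.charpoly_monic _).ne_zero, Polynomial.IsRoot.def,
      Matrix.eval_charpoly, ← Set.mem_ofPred.1 hs, b.det_apply]
    congr 1
    ext i j
    simp [Module.Basis.toMatrix_apply, Matrix.diagonal_apply, Finsupp.single_apply, eq_comm,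
      add_comm]
  have hb : (b : ι → F) ≠ 0 := have := b.index_nonempty; fun h =>
    b.ne_zero (Classical.arbitrary ι) (congrFun h _)
  have hnull : ∫⁻ x : ι → F, {x | b.det x = 0}.indicator 1 x ≤ ∫⁻ _ : ι → F, 0 := by
    refine lintegral_le_of_forall_line_le hb (measurable_one.indicator hZ) measurable_const
      fun x => ?_
    have : (fun s : ℝ => {x | b.det x = 0}.indicator (1 : (ι → F) → ℝ≥0∞) (x + s • ⇑b)) =
      {s | b.det (x + s • ⇑b) = 0}.indicator 1 := rfl
    rw [this, lintegral_indicator_one (hroots x).measurableSet, (hroots x).measure_zero]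
    exact zero_le
  rw [lintegral_indicator_one hZ, lintegral_zero, nonpos_iff_eq_zero] at hnull
  simpa [ae_iff] using hnull

variable [NormedAddCommGroup F] [InnerProductSpace ℝ F] [FiniteDimensional ℝ F]
  [MeasurableSpace F] [BorelSpace F]

lemma lintegral_eq_enorm_det_mul_lintegral_inner (b : OrthonormalBasis ι ℝ F) {x : ι → F}
    (hx : b.toBasis.det x ≠ 0) {g : (ι → ℝ) → ℝ≥0∞} (hg : Measurable g) :
    ∫⁻ t, g t = ‖b.toBasis.det x‖ₑ * ∫⁻ a : F, g fun i => inner ℝ a (x i) := by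
  set f : (ι → ℝ) →ₗ[ℝ] ι → ℝ := Matrix.toLin' (b.toBasis.toMatrix x).transpose
  have hdet : LinearMap.det f = b.toBasis.det x := by
    rw [LinearMap.det_toLin', Matrix.det_transpose, Module.Basis.det_apply]
  have hf (a : F) : f (b.repr a).ofLp = fun i => inner ℝ a (x i) := by
    ext i
    rw [← b.sum_inner_mul_inner a (x i)]
    simp [f, Matrix.mulVec, dotProduct, Module.Basis.toMatrix_apply, b.repr_apply_apply,
      real_inner_comm a, mul_comm]
  have hfm : Measurable fun t => g (f t) := hg.comp f.continuous_of_finiteDimensional.measurable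
  have h := enorm_det_mul_setLIntegral_preimage_linearMap volume (hdet ▸ hx) MeasurableSet.univ hg
  rw [Set.preimage_univ, Measure.restrict_univ, hdet,
    ← ((PiLp.volume_preserving_ofLp ι).comp b.measurePreserving_repr).lintegral_comp hfm] at h
  simp only [Function.comp_apply, hf] at h
  exact h.symm

end LinearSystem

section BlaschkePetkantschin

variable {H : Type*} [NormedAddCommGroup H] [InnerProductSpace ℝ H] {e : H}

/-- The section of `K` by the graph of `a`, seen as a linear form on the orthogonal complement of
`e`, through the orthogonal projection onto that complement. -/
def graphSection (e : H) (K : Set H) (a : (ℝ ∙ e)ᗮ) : Set (ℝ ∙ e)ᗮ :=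
  {x | inner ℝ a x • e + (x : H) ∈ K}

variable [FiniteDimensional ℝ H] [MeasurableSpace H] [BorelSpace H]

lemma measurePreserving_smul_add (he : ‖e‖ = 1) :
    MeasurePreserving fun p : ℝ × (ℝ ∙ e)ᗮ => p.1 • e + (p.2 : H) := by
  have h := ((LinearIsometryEquiv.toSpanUnitSingleton (𝕜 := ℝ) e he).measurePreserving.prod
    (MeasurePreserving.id (volume : Measure (ℝ ∙ e)ᗮ)))
  have := (ℝ ∙ e).orthogonalDecomposition.symm.measurePreserving.comp
    ((WithLp.volume_preserving_toLp _ _).comp h)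
  exact this

lemma measurableSet_graphSection {K : Set H} (hK : MeasurableSet K) (a : (ℝ ∙ e)ᗮ) :
    MeasurableSet (graphSection e K a) :=
  hK.preimage (by fun_prop)

lemma measurable_volume_graphSection {K : Set H} (hK : MeasurableSet K) :
    Measurable fun a => volume (graphSection e K a) := by
  have : Measurable fun p : (ℝ ∙ e)ᗮ × (ℝ ∙ e)ᗮ => inner ℝ p.1 p.2 • e + (p.2 : H) := by fun_prop
  exact measurable_measure_prodMk_left (this hK)

/-- The linear **Blaschke–Petkantschin formula**, in a chart of the Grassmannian. -/
lemma lintegral_simplexMoment_graphSection {ι : Type*} [Fintype ι] [DecidableEq ι]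
    [Nontrivial (ℝ ∙ e)ᗮ] (he : ‖e‖ = 1) (b : OrthonormalBasis ι ℝ (ℝ ∙ e)ᗮ) {K : Set H}
    (hK : MeasurableSet K) :
    ∫⁻ a, simplexMoment b.toBasis (graphSection e K a) = volume K ^ Fintype.card ι := by
  set Ψ : (ι → ℝ) × (ι → (ℝ ∙ e)ᗮ) → ι → H := fun p i => p.1 i • e + (p.2 i : H)
  have hΨ : MeasurePreserving Ψ :=
    (volume_preserving_pi fun _ : ι => measurePreserving_smul_add he).comp
      (volume_measurePreserving_arrowProdEquivProdArrow ℝ (ℝ ∙ e)ᗮ ι).symm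
  have hKΨ : MeasurableSet (Ψ ⁻¹' Set.univ.pi fun _ => K) :=
    hΨ.measurable (.univ_pi fun _ => hK)
  set G : (ι → ℝ) × (ι → (ℝ ∙ e)ᗮ) → ℝ≥0∞ := (Ψ ⁻¹' Set.univ.pi fun _ => K).indicator 1
  have hG : Measurable G := measurable_one.indicator hKΨ
  have hdet := (continuous_basis_det b.toBasis).measurable.enorm
  calc ∫⁻ a, simplexMoment b.toBasis (graphSection e K a)
      = ∫⁻ a, ∫⁻ x : ι → (ℝ ∙ e)ᗮ, ‖b.toBasis.det x‖ₑ * G (fun i => inner ℝ a (x i), x) := by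
        refine lintegral_congr fun a => ?_
        rw [simplexMoment,
          ← lintegral_indicator (.univ_pi fun _ => measurableSet_graphSection hK a)]
        refine lintegral_congr fun x => ?_
        classical
        simp [G, Ψ, Set.indicator_apply, graphSection]
    _ = ∫⁻ x : ι → (ℝ ∙ e)ᗮ, ∫⁻ a, ‖b.toBasis.det x‖ₑ * G (fun i => inner ℝ a (x i), x) :=
        lintegral_lintegral_swap
          ((hdet.comp measurable_snd).mul (hG.comp (by fun_prop))).aemeasurable
    _ = ∫⁻ x : ι → (ℝ ∙ e)ᗮ, ∫⁻ t, G (t, x) := by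
        refine lintegral_congr_ae ?_
        filter_upwards [ae_basis_det_ne_zero b.toBasis] with x hx
        have hGx : Measurable fun a => G (fun i => inner ℝ a (x i), x) := hG.comp (by fun_prop)
        rw [lintegral_const_mul _ hGx]
        exact (lintegral_eq_enorm_det_mul_lintegral_inner b hx
          (hG.comp (measurable_prodMk_right (y := x)))).symm
    _ = ∫⁻ p, G p := (lintegral_prod_symm _ hG.aemeasurable).symm
    _ = volume K ^ Fintype.card ι := by
        rw [lintegral_indicator_one hKΨ,
          hΨ.measure_preimage (MeasurableSet.univ_pi fun _ => hK).nullMeasurableSet, volume_pi_pi,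
          Finset.prod_const, Finset.card_univ]

end BlaschkePetkantschin

section Polar

/-- The open star body with radial function `ρ`. Only the values of `ρ` outside the origin matter,
and `ρ` is meant to be invariant under positive dilations. -/
def starBody {F : Type*} [NormedAddCommGroup F] (ρ : F → ℝ≥0∞) : Set F :=
  {x | ‖x‖ₑ < ρ x}

lemma measurableSet_starBody {F : Type*} [NormedAddCommGroup F] [MeasurableSpace F] [BorelSpace F]
    {ρ : F → ℝ≥0∞} (hρ : Measurable ρ) : MeasurableSet (starBody ρ) :=
  measurableSet_lt measurable_enorm hρ

variable {F : Type*} [NormedAddCommGroup F] [NormedSpace ℝ F] [FiniteDimensional ℝ F]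
  [MeasurableSpace F] [BorelSpace F] (μ : Measure F) [μ.IsAddHaarMeasure]

lemma ae_toSphere_notMem {s : Submodule ℝ F} (hs : s ≠ ⊤) :
    ∀ᵐ θ : sphere (0 : F) 1 ∂μ.toSphere, (θ : F) ∉ s := by
  have hm : MeasurableSet {θ : sphere (0 : F) 1 | (θ : F) ∈ s} :=
    s.closed_of_finiteDimensional.measurableSet.preimage measurable_subtype_coe
  simp only [ae_iff, not_not]
  rw [Measure.toSphere_apply' _ hm]
  refine mul_eq_zero_of_right _ (measure_mono_null ?_ (Measure.addHaar_submodule μ s hs))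
  rintro _ ⟨r, -, _, ⟨θ, hθ, rfl⟩, rfl⟩
  exact s.smul_mem r hθ

variable [Nontrivial F]

lemma lintegral_eq_lintegral_toSphere {f : F → ℝ≥0∞} (hf : Measurable f) :
    ∫⁻ x, f x ∂μ = ∫⁻ θ : sphere (0 : F) 1, (∫⁻ r : Set.Ioi (0 : ℝ), f ((r : ℝ) • (θ : F))
      ∂Measure.volumeIoiPow (Module.finrank ℝ F - 1)) ∂μ.toSphere := by
  have hg : Measurable fun p : sphere (0 : F) 1 × Set.Ioi (0 : ℝ) => f ((p.2 : ℝ) • (p.1 : F)) :=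
    hf.comp (by fun_prop)
  rw [← lintegral_prod _ hg.aemeasurable,
    ← μ.measurePreserving_homeomorphUnitSphereProd.lintegral_comp hg]
  conv_lhs => rw [← restrict_compl_singleton (μ := μ) 0]
  rw [← lintegral_subtype_comap (measurableSet_singleton _).compl]
  refine lintegral_congr fun x => ?_
  have hx : ‖(x : F)‖ ≠ 0 := norm_ne_zero_iff.2 x.2
  simp [smul_smul, hx]

lemma volumeIoiPow_setOf_ofReal_lt (d : ℕ) (c : ℝ≥0∞) :
    Measure.volumeIoiPow d {r | ENNReal.ofReal r < c} = c ^ (d + 1) / (d + 1 : ℕ) := by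
  have hfin {c : ℝ≥0∞} (hc : c ≠ ∞) :
      Measure.volumeIoiPow d {r | ENNReal.ofReal r < c} = c ^ (d + 1) / (d + 1 : ℕ) := by
    lift c to ℝ≥0 using hc
    rcases eq_zero_or_pos c with rfl | hc
    · simp
    have hIio : {r : Set.Ioi (0 : ℝ) | ENNReal.ofReal r < c} =
        Set.Iio ⟨(c : ℝ), Set.mem_Ioi.2 (NNReal.coe_pos.2 hc)⟩ := by
      ext r
      rw [Set.mem_ofPred_eq, Set.mem_Iio, ← Subtype.coe_lt_coe, ← ENNReal.ofReal_coe_nnreal,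
        ENNReal.ofReal_lt_ofReal_iff (NNReal.coe_pos.2 hc)]
    rw [hIio, Measure.volumeIoiPow_apply_Iio, ENNReal.ofReal_div_of_pos (by positivity)]
    congr 1
    · exact (ENNReal.ofReal_pow c.coe_nonneg _).trans (by rw [ENNReal.ofReal_coe_nnreal])
    · exact_mod_cast ENNReal.ofReal_natCast (d + 1)
  rcases eq_or_ne c ∞ with rfl | hc
  · refine le_antisymm ?_ (le_of_tendsto' (((ENNReal.continuous_div_const _ (by simp)).comp
      (ENNReal.continuous_pow (d + 1))).tendsto ∞ |>.comp ENNReal.tendsto_nat_nhds_top) fun n => ?_)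
    · simp [ENNReal.top_div_of_ne_top]
    · exact (hfin (ENNReal.natCast_ne_top n)).ge.trans
        (measure_mono fun r (_ : ENNReal.ofReal r < n) => ENNReal.ofReal_lt_top)
  · exact hfin hc

lemma setLIntegral_starBody {ρ ψ : F → ℝ≥0∞} (hρ : Measurable ρ) (hψ : Measurable ψ)
    (hρ_smul : ∀ r : ℝ, 0 < r → ∀ x, ρ (r • x) = ρ x)
    (hψ_smul : ∀ r : ℝ, 0 < r → ∀ x, ψ (r • x) = ψ x) :
    ∫⁻ x in starBody ρ, ψ x ∂μ =
      (∫⁻ θ : sphere (0 : F) 1, ρ θ ^ Module.finrank ℝ F * ψ θ ∂μ.toSphere) /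
        Module.finrank ℝ F := by
  obtain ⟨d, hd⟩ := Nat.exists_eq_add_one.2 (Module.finrank_pos (R := ℝ) (M := F))
  have hS := measurableSet_starBody hρ
  rw [← lintegral_indicator hS, lintegral_eq_lintegral_toSphere μ (hψ.indicator hS), hd,
    Nat.add_sub_cancel, div_eq_mul_inv, ← lintegral_mul_const' _ _ (by simp)]
  refine lintegral_congr fun θ => ?_
  have hθ : ‖(θ : F)‖ₑ = 1 := by simp [← ofReal_norm]
  have hmem (r : Set.Ioi (0 : ℝ)) : (starBody ρ).indicator ψ ((r : ℝ) • (θ : F)) =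
      {r : Set.Ioi (0 : ℝ) | ENNReal.ofReal r < ρ θ}.indicator (fun _ => ψ θ) r := by
    classical
    simp only [starBody, Set.indicator_apply, Set.mem_ofPred_eq, enorm_smul, hθ, mul_one,
      hρ_smul r r.2, hψ_smul r r.2, Real.enorm_of_nonneg r.2.out.le]
  rw [lintegral_congr hmem, lintegral_indicator_const (measurableSet_lt (by fun_prop)
    measurable_const), volumeIoiPow_setOf_ofReal_lt, div_eq_mul_inv]
  ring

lemma measure_starBody {ρ : F → ℝ≥0∞} (hρ : Measurable ρ)
    (hρ_smul : ∀ r : ℝ, 0 < r → ∀ x, ρ (r • x) = ρ x) :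
    μ (starBody ρ) = μ (ball 0 1) * ((μ.toSphere Set.univ)⁻¹ *
      ∫⁻ θ : sphere (0 : F) 1, ρ θ ^ Module.finrank ℝ F ∂μ.toSphere) := by
  have hdim : (Module.finrank ℝ F : ℝ≥0∞) ≠ 0 := by exact_mod_cast Module.finrank_pos.ne'
  have hball : μ (ball (0 : F) 1) ≠ 0 := (measure_ball_pos _ _ one_pos).ne'
  have h := setLIntegral_starBody μ hρ (ψ := fun _ => 1) measurable_const hρ_smul (by simp)
  simp only [mul_one, setLIntegral_one] at h
  rw [h, Measure.toSphere_apply_univ, ENNReal.mul_inv (.inl hdim) (.inr hball), ← mul_assoc,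
    mul_left_comm, ENNReal.mul_inv_cancel hball measure_ball_lt_top.ne, mul_one,
    ENNReal.div_eq_inv_mul]

end Polar

section Gnomonic

/-- Take for `f` the positive square root of `1 + a ⊗ a`. -/
lemma exists_linearMap_det_norm {E : Type*} [NormedAddCommGroup E] [InnerProductSpace ℝ E]
    [FiniteDimensional ℝ E] (a : E) :
    ∃ f : E →ₗ[ℝ] E, LinearMap.det f = √(1 + ‖a‖ ^ 2) ∧
      ∀ x, ‖f x‖ ^ 2 = inner ℝ a x ^ 2 + ‖x‖ ^ 2 := by
  set r := √(1 + ‖a‖ ^ 2)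
  have hr : 0 < 1 + r := by positivity
  have ha : ‖a‖ ^ 2 = r ^ 2 - 1 := by rw [Real.sq_sqrt (by positivity)]; ring
  refine ⟨LinearMap.transvection (innerₛₗ ℝ a) ((1 + r)⁻¹ • a), ?_, fun x => ?_⟩
  · rw [LinearMap.transvection.det, innerₛₗ_apply_apply, inner_smul_right,
      real_inner_self_eq_norm_sq, ha]
    field_simp
    ring
  · rw [LinearMap.transvection.apply, innerₛₗ_apply_apply, smul_smul, norm_add_sq_real, norm_smul,
      mul_pow, Real.norm_eq_abs, sq_abs, inner_smul_right, real_inner_comm, ha]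
    field_simp
    ring

lemma volume_eq_enorm_det_mul_volume_preimage {E G : Type*} [NormedAddCommGroup E]
    [InnerProductSpace ℝ E] [FiniteDimensional ℝ E] [MeasurableSpace E] [BorelSpace E]
    [NormedAddCommGroup G] [InnerProductSpace ℝ G] [FiniteDimensional ℝ G] [MeasurableSpace G]
    [BorelSpace G] {f : E →ₗ[ℝ] E} {g : E →ₗ[ℝ] G} (hf : LinearMap.det f ≠ 0)
    (hfg : ∀ x, ‖g x‖ = ‖f x‖) (hdim : Module.finrank ℝ E = Module.finrank ℝ G) (A : Set G) :
    volume A = ‖LinearMap.det f‖ₑ * volume (g ⁻¹' A) := by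
  set F := LinearMap.equivOfDetNeZero f hf
  have hF (x : E) : f (F.symm x) = x := F.apply_symm_apply x
  let u : E ≃ₗᵢ[ℝ] G := LinearIsometry.toLinearIsometryEquiv
    { toLinearMap := g ∘ₗ F.symm.toLinearMap
      norm_map' := fun x => by simp [hfg, hF] } hdim
  have hu : g ⁻¹' A = f ⁻¹' (u ⁻¹' A) := by
    ext x
    have : F.symm (f x) = x := F.symm_apply_apply x
    simp [u, this]
  rw [hu, Measure.addHaar_preimage_linearMap _ hf, ← Real.enorm_eq_ofReal_abs, ← mul_assoc,
    ← enorm_mul, mul_inv_cancel₀ hf, enorm_one, one_mul,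
    u.measurePreserving.measure_preimage_emb u.toHomeomorph.measurableEmbedding]

variable {H : Type*} [NormedAddCommGroup H] [InnerProductSpace ℝ H] {e : H}

lemma inner_smul_add_orthogonal (he : ‖e‖ = 1) (t : ℝ) (x : (ℝ ∙ e)ᗮ) :
    inner ℝ e (t • e + (x : H)) = t := by
  rw [inner_add_right, inner_smul_right, real_inner_self_eq_norm_sq, he,
    Submodule.mem_orthogonal_singleton_iff_inner_right.1 x.2]
  ring

lemma inner_smul_add_smul_add (he : ‖e‖ = 1) (s t : ℝ) (x y : (ℝ ∙ e)ᗮ) :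
    inner ℝ (s • e + (x : H)) (t • e + (y : H)) = s * t + inner ℝ x y := by
  rw [inner_add_left, inner_smul_left, inner_smul_add_orthogonal he, inner_add_right,
    inner_smul_right, Submodule.mem_orthogonal_singleton_iff_inner_left.1 x.2, mul_zero, zero_add,
    Submodule.coe_inner]
  rfl

lemma norm_smul_add_orthogonal_sq (he : ‖e‖ = 1) (t : ℝ) (x : (ℝ ∙ e)ᗮ) :
    ‖t • e + (x : H)‖ ^ 2 = t ^ 2 + ‖x‖ ^ 2 := by
  rw [← real_inner_self_eq_norm_sq, inner_smul_add_smul_add he, real_inner_self_eq_norm_sq, sq t]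

lemma graphSection_closedBall (he : ‖e‖ = 1) {a : (ℝ ∙ e)ᗮ} {f : (ℝ ∙ e)ᗮ →ₗ[ℝ] (ℝ ∙ e)ᗮ}
    (hf : ∀ x, ‖f x‖ ^ 2 = inner ℝ a x ^ 2 + ‖x‖ ^ 2) :
    graphSection e (closedBall 0 1) a = f ⁻¹' closedBall 0 1 := by
  ext x
  rw [graphSection, Set.mem_ofPred_eq, Set.mem_preimage, mem_closedBall_zero_iff,
    mem_closedBall_zero_iff, ← sq_le_sq₀ (norm_nonneg _) zero_le_one,
    ← sq_le_sq₀ (norm_nonneg (f x)) zero_le_one, norm_smul_add_orthogonal_sq he, hf]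

/-- The gnomonic (central) projection onto the affine hyperplane `e + (ℝ ∙ e)ᗮ`, read in the
orthogonal complement of `e`. It takes the junk value `0` where `inner ℝ e x = 0`. -/
def gnomonic (e x : H) : (ℝ ∙ e)ᗮ :=
  (inner ℝ e x)⁻¹ • (ℝ ∙ e)ᗮ.orthogonalProjectionOnto x

lemma gnomonic_smul {r : ℝ} (hr : r ≠ 0) (x : H) : gnomonic e (r • x) = gnomonic e x := by
  rw [gnomonic, gnomonic, inner_smul_right, map_smul, smul_smul]
  congr 1
  field_simp

lemma gnomonic_smul_add (he : ‖e‖ = 1) (t : ℝ) (x : (ℝ ∙ e)ᗮ) :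
    gnomonic e (t • e + (x : H)) = t⁻¹ • x := by
  rw [gnomonic, inner_smul_add_orthogonal he, map_add, map_smul,
    Submodule.orthogonalProjectionOnto_orthogonalComplement_singleton_eq_zero, smul_zero, zero_add,
    Submodule.orthogonalProjectionOnto_mem_subspace_eq_self]

lemma smul_add_gnomonic {x : H} (he : ‖e‖ = 1) (hx : inner ℝ e x ≠ 0) :
    inner ℝ e x • (e + (gnomonic e x : H)) = x := by
  rw [gnomonic, Submodule.coe_smul, smul_add, smul_smul, mul_inv_cancel₀ hx, one_smul]
  conv_rhs => rw [← (ℝ ∙ e).starProjection_add_starProjection_orthogonal x]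
  rw [Submodule.starProjection_unit_singleton ℝ he]
  rfl

lemma finrank_orthogonal_span_singleton_add_one [FiniteDimensional ℝ H] {w : H} (hw : ‖w‖ = 1) :
    Module.finrank ℝ (ℝ ∙ w)ᗮ + 1 = Module.finrank ℝ H := by
  rw [← (ℝ ∙ w).finrank_add_finrank_orthogonal, finrank_span_singleton, add_comm]
  exact norm_ne_zero_iff.1 (hw ▸ one_ne_zero)

variable [FiniteDimensional ℝ H] [MeasurableSpace H] [BorelSpace H]

lemma volume_preimage_coe_orthogonal (he : ‖e‖ = 1) {w : H} (hw : ‖w‖ = 1)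
    (hew : inner ℝ e w ≠ 0) (K : Set H) :
    volume ((↑) ⁻¹' K : Set (ℝ ∙ w)ᗮ) =
      ‖inner ℝ e w‖ₑ⁻¹ * volume (graphSection e K (-gnomonic e w)) := by
  set t := inner ℝ e w
  set p := gnomonic e w
  have hwt : t • ((1 : ℝ) • e + (p : H)) = w := by rw [one_smul, smul_add_gnomonic he hew]
  have ht : 1 + ‖-p‖ ^ 2 = (|t|⁻¹) ^ 2 := by
    have h := norm_smul_add_orthogonal_sq he 1 p
    rw [← hwt, norm_smul] at hw
    rw [norm_neg, ← one_pow 2, ← h, eq_inv_of_mul_eq_one_right hw, Real.norm_eq_abs]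
  obtain ⟨f, hdet, hf⟩ := exists_linearMap_det_norm (-p)
  rw [ht, Real.sqrt_sq (by positivity)] at hdet
  let g : (ℝ ∙ e)ᗮ →ₗ[ℝ] (ℝ ∙ w)ᗮ :=
    ((innerₛₗ ℝ (-p)).smulRight e + (ℝ ∙ e)ᗮ.subtype).codRestrict _ fun x => by
      rw [Submodule.mem_orthogonal_singleton_iff_inner_right]
      change inner ℝ w (inner ℝ (-p) x • e + (x : H)) = 0
      rw [← hwt, inner_smul_left, inner_smul_add_smul_add he, inner_neg_left]
      simp
  have hg (x : (ℝ ∙ e)ᗮ) : ‖g x‖ = ‖f x‖ := by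
    rw [← sq_eq_sq₀ (norm_nonneg _) (norm_nonneg _), hf]
    exact norm_smul_add_orthogonal_sq he _ x
  have hdim : Module.finrank ℝ (ℝ ∙ e)ᗮ = Module.finrank ℝ (ℝ ∙ w)ᗮ := by
    rw [← Nat.add_right_cancel_iff (n := 1), finrank_orthogonal_span_singleton_add_one he,
      finrank_orthogonal_span_singleton_add_one hw]
  have hne : LinearMap.det f ≠ 0 := hdet ▸ inv_ne_zero (abs_ne_zero.2 hew)
  rw [volume_eq_enorm_det_mul_volume_preimage hne hg hdim, hdet, enorm_inv (abs_ne_zero.2 hew),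
    enorm_abs]
  rfl

lemma measurable_gnomonic : Measurable (gnomonic e) := by
  unfold gnomonic
  fun_prop

lemma setLIntegral_comp_gnomonic (he : ‖e‖ = 1) {h : (ℝ ∙ e)ᗮ → ℝ≥0∞} (hh : Measurable h) :
    ∫⁻ x in {x | |inner ℝ e x| < 1}, h (gnomonic e x) =
      (∫⁻ s in ball (0 : ℝ) 1, ‖s‖ₑ ^ Module.finrank ℝ (ℝ ∙ e)ᗮ) * ∫⁻ a, h a := by
  have hslab : MeasurableSet {x : H | |inner ℝ e x| < 1} :=
    measurableSet_lt (by fun_prop) measurable_const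
  have hscale {s : ℝ} (hs : s ≠ 0) :
      ∫⁻ y, h (s⁻¹ • y) = ‖s‖ₑ ^ Module.finrank ℝ (ℝ ∙ e)ᗮ * ∫⁻ a, h a := by
    rw [← lintegral_map hh (by fun_prop), Measure.map_addHaar_smul _ (inv_ne_zero hs),
      lintegral_smul_measure]
    simp [← Real.enorm_eq_ofReal_abs]
  have hpre : (fun p : ℝ × (ℝ ∙ e)ᗮ => p.1 • e + (p.2 : H)) ⁻¹' {x | |inner ℝ e x| < 1} =
      ball (0 : ℝ) 1 ×ˢ Set.univ := by
    ext p
    simp [inner_smul_add_orthogonal he]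
  have hhg : Measurable fun x : H => h (gnomonic e x) := hh.comp measurable_gnomonic
  have hmeas : Measurable fun p : ℝ × (ℝ ∙ e)ᗮ => h (gnomonic e (p.1 • e + (p.2 : H))) :=
    hhg.comp (by fun_prop)
  rw [← (measurePreserving_smul_add he).setLIntegral_comp_preimage hslab hhg, hpre,
    Measure.volume_eq_prod, setLIntegral_prod _ hmeas.aemeasurable,
    ← lintegral_mul_const _ (by fun_prop)]
  refine setLIntegral_congr_fun_ae measurableSet_ball ?_
  filter_upwards [Measure.ae_ne volume (0 : ℝ)] with s hs _
  simp only [gnomonic_smul_add he, Measure.restrict_univ, hscale hs]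

end Gnomonic

section Sections

variable {H : Type*} [NormedAddCommGroup H] [InnerProductSpace ℝ H] [FiniteDimensional ℝ H]
  [MeasurableSpace H] [BorelSpace H] {e : H}

lemma ae_toSphere_inner_ne_zero (he : e ≠ 0) :
    ∀ᵐ θ : sphere (0 : H) 1 ∂(volume : Measure H).toSphere, inner ℝ e (θ : H) ≠ 0 := by
  have hs : (ℝ ∙ e)ᗮ ≠ ⊤ := by simpa [Submodule.orthogonal_eq_top_iff] using he
  filter_upwards [ae_toSphere_notMem volume hs] with θ hθ h
  exact hθ (Submodule.mem_orthogonal_singleton_iff_inner_right.2 h)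

lemma lintegral_toSphere_gnomonic (he : ‖e‖ = 1) {h : (ℝ ∙ e)ᗮ → ℝ≥0∞} (hh : Measurable h) :
    ∫⁻ θ : sphere (0 : H) 1, ‖inner ℝ e (θ : H)‖ₑ⁻¹ ^ Module.finrank ℝ H * h (gnomonic e (θ : H))
        ∂(volume : Measure H).toSphere =
      Module.finrank ℝ H *
        ((∫⁻ s in ball (0 : ℝ) 1, ‖s‖ₑ ^ Module.finrank ℝ (ℝ ∙ e)ᗮ) * ∫⁻ a, h a) := by
  have : Nontrivial H := ⟨e, 0, norm_ne_zero_iff.1 (he ▸ one_ne_zero)⟩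
  set ρ : H → ℝ≥0∞ := fun x => ‖x‖ₑ / ‖inner ℝ e x‖ₑ
  have hslab : {x : H | |inner ℝ e x| < 1} =ᵐ[volume] starBody ρ := by
    filter_upwards [Measure.ae_ne volume (0 : H)] with x hx
    refine propext ?_
    have hx0 : ‖x‖ₑ ≠ 0 := enorm_ne_zero.2 hx
    calc |inner ℝ e x| < 1
        ↔ ‖inner ℝ e x‖ₑ < 1 := by rw [← ofReal_norm, ENNReal.ofReal_lt_one, Real.norm_eq_abs]
      _ ↔ ‖x‖ₑ * ‖inner ℝ e x‖ₑ < ‖x‖ₑ * 1 := (ENNReal.mul_lt_mul_iff_right hx0 enorm_ne_top).symm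
      _ ↔ ‖x‖ₑ < ‖x‖ₑ / ‖inner ℝ e x‖ₑ := by
        rw [mul_one, ENNReal.lt_div_iff_mul_lt (.inr enorm_ne_top) (.inr hx0)]
  have hstar := setLIntegral_starBody volume (ρ := ρ) (ψ := fun x => h (gnomonic e x))
    (by fun_prop) (hh.comp measurable_gnomonic)
    (fun r hr x => by
      simp only [ρ, inner_smul_right, enorm_smul, enorm_mul]
      exact ENNReal.mul_div_mul_left _ _ (by simpa using hr.ne') (by simp))
    (fun r hr x => by rw [gnomonic_smul hr.ne'])
  rw [← setLIntegral_congr hslab, setLIntegral_comp_gnomonic he hh] at hstar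
  have hρ (θ : sphere (0 : H) 1) : ρ θ = ‖inner ℝ e (θ : H)‖ₑ⁻¹ := by
    simp [ρ, ← ofReal_norm]
  simp only [hρ] at hstar
  rw [hstar, ENNReal.mul_div_cancel]
  · exact_mod_cast Module.finrank_pos.ne'
  · exact ENNReal.natCast_ne_top _

lemma exists_lintegral_volume_section_pow_eq (he : ‖e‖ = 1) :
    ∃ C : ℝ≥0∞, ∀ K : Set H, MeasurableSet K →
      ∫⁻ w : sphere (0 : H) 1, volume ((↑) ⁻¹' K : Set (ℝ ∙ (w : H))ᗮ) ^ Module.finrank ℝ H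
          ∂(volume : Measure H).toSphere =
        C * ∫⁻ a, volume (graphSection e K a) ^ Module.finrank ℝ H := by
  refine ⟨Module.finrank ℝ H * ∫⁻ s in ball (0 : ℝ) 1, ‖s‖ₑ ^ Module.finrank ℝ (ℝ ∙ e)ᗮ,
    fun K hK => ?_⟩
  have hvol : Measurable fun a => volume (graphSection e K (-a)) ^ Module.finrank ℝ H :=
    ((measurable_volume_graphSection hK).comp measurable_neg).pow_const _
  rw [← lintegral_neg_eq_self fun a => volume (graphSection e K a) ^ _, mul_assoc,
    ← lintegral_toSphere_gnomonic he hvol]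
  refine lintegral_congr_ae ?_
  filter_upwards [ae_toSphere_inner_ne_zero (norm_ne_zero_iff.1 (he ▸ one_ne_zero))] with w hw
  rw [volume_preimage_coe_orthogonal he (norm_eq_of_mem_sphere w) hw, mul_pow]

section Chart

variable {ι : Type*} [Fintype ι] [DecidableEq ι] [Nontrivial (ℝ ∙ e)ᗮ]

lemma simplexMoment_mul_lintegral_volume_graphSection_pow_le (he : ‖e‖ = 1)
    (b : OrthonormalBasis ι ℝ (ℝ ∙ e)ᗮ) {K : Set H} (hK : MeasurableSet K) :
    simplexMoment b.toBasis (closedBall 0 1) *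
        ∫⁻ a, volume (graphSection e K a) ^ (Fintype.card ι + 1) ≤
      volume (closedBall (0 : (ℝ ∙ e)ᗮ) 1) ^ (Fintype.card ι + 1) *
        volume K ^ Fintype.card ι := by
  rw [← lintegral_simplexMoment_graphSection he b hK,
    ← lintegral_const_mul _ ((measurable_volume_graphSection hK).pow_const _),
    ← lintegral_const_mul' _ _ (ENNReal.pow_ne_top measure_closedBall_lt_top.ne)]
  exact lintegral_mono fun a =>
    simplexMoment_closedBall_mul_le b.toBasis (measurableSet_graphSection hK a)

lemma simplexMoment_mul_lintegral_volume_graphSection_closedBall_pow (he : ‖e‖ = 1)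
    (b : OrthonormalBasis ι ℝ (ℝ ∙ e)ᗮ) :
    simplexMoment b.toBasis (closedBall 0 1) *
        ∫⁻ a, volume (graphSection e (closedBall 0 1) a) ^ (Fintype.card ι + 1) =
      volume (closedBall (0 : (ℝ ∙ e)ᗮ) 1) ^ (Fintype.card ι + 1) *
        volume (closedBall (0 : H) 1) ^ Fintype.card ι := by
  have hB : MeasurableSet (closedBall (0 : H) 1) := measurableSet_closedBall
  rw [← lintegral_simplexMoment_graphSection he b hB,
    ← lintegral_const_mul _ ((measurable_volume_graphSection hB).pow_const _),
    ← lintegral_const_mul' _ _ (ENNReal.pow_ne_top measure_closedBall_lt_top.ne)]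
  refine lintegral_congr fun a => ?_
  obtain ⟨f, hdet, hf⟩ := exists_linearMap_det_norm a
  have hne : LinearMap.det f ≠ 0 := by rw [hdet]; positivity
  rw [graphSection_closedBall he hf, mul_comm (_ ^ _),
    simplexMoment_preimage_linearMap_mul b.toBasis hne measurableSet_closedBall]

end Chart

/-- **Busemann's intersection inequality**. -/
theorem lintegral_volume_section_pow_mul_le {m : ℕ} (hm : m ≠ 0) (hH : Module.finrank ℝ H = m + 1)
    {K : Set H} (hK : MeasurableSet K) :
    (∫⁻ w : sphere (0 : H) 1, volume ((↑) ⁻¹' K : Set (ℝ ∙ (w : H))ᗮ) ^ (m + 1)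
        ∂(volume : Measure H).toSphere) * volume (closedBall (0 : H) 1) ^ m ≤
      (∫⁻ w : sphere (0 : H) 1, volume ((↑) ⁻¹' closedBall (0 : H) 1 : Set (ℝ ∙ (w : H))ᗮ) ^ (m + 1)
        ∂(volume : Measure H).toSphere) * volume K ^ m := by
  have : Nontrivial H := Module.nontrivial_of_finrank_pos (R := ℝ) (by omega)
  obtain ⟨e, he⟩ := exists_norm_eq H zero_le_one
  have hE : Module.finrank ℝ (ℝ ∙ e)ᗮ = m := by
    have := finrank_orthogonal_span_singleton_add_one he
    omega
  have : Nontrivial (ℝ ∙ e)ᗮ := Module.nontrivial_of_finrank_pos (R := ℝ) (by omega)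
  have hcard : Fintype.card (Fin (Module.finrank ℝ (ℝ ∙ e)ᗮ)) = m := by simp [hE]
  obtain ⟨C, hC⟩ := exists_lintegral_volume_section_pow_eq he
  have hle := simplexMoment_mul_lintegral_volume_graphSection_pow_le he (stdOrthonormalBasis ℝ _) hK
  have heq := simplexMoment_mul_lintegral_volume_graphSection_closedBall_pow he
    (stdOrthonormalBasis ℝ _)
  rw [hH] at hC
  rw [hcard] at hle heq
  rw [hC _ hK, hC _ measurableSet_closedBall]
  set β := simplexMoment (stdOrthonormalBasis ℝ (ℝ ∙ e)ᗮ).toBasis (closedBall 0 1)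
  set κ := volume (closedBall (0 : (ℝ ∙ e)ᗮ) 1) ^ (m + 1)
  set I := ∫⁻ a, volume (graphSection e K a) ^ (m + 1)
  set J := ∫⁻ a, volume (graphSection e (closedBall 0 1) a) ^ (m + 1)
  have hβ : β ≠ ∞ := (simplexMoment_lt_top _ isBounded_closedBall).ne
  have hβ0 : β ≠ 0 := by
    refine left_ne_zero_of_mul (b := J) (heq ▸ ?_)
    exact mul_ne_zero (pow_ne_zero _ (measure_closedBall_pos _ _ one_pos).ne')
      (pow_ne_zero _ (measure_closedBall_pos _ _ one_pos).ne')
  refine (ENNReal.mul_le_mul_iff_right hβ0 hβ).1 ?_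
  calc β * (C * I * volume (closedBall (0 : H) 1) ^ m)
      = C * volume (closedBall (0 : H) 1) ^ m * (β * I) := by ring
    _ ≤ C * volume (closedBall (0 : H) 1) ^ m * (κ * volume K ^ m) := by gcongr
    _ = C * volume K ^ m * (κ * volume (closedBall (0 : H) 1) ^ m) := by ring
    _ = β * (C * J * volume K ^ m) := by rw [← heq]; ring

end Sections

section Funk

section RadialExtension

variable {F : Type*} [NormedAddCommGroup F] [NormedSpace ℝ F]

open Classical in
/-- The extension of a function on the unit sphere to a function invariant under positive
dilations, with the value `0` at the origin. -/
def radialExtension (φ : sphere (0 : F) 1 → ℝ≥0∞) (x : F) : ℝ≥0∞ :=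
  if hx : x ∈ ({0}ᶜ : Set F) then φ (homeomorphUnitSphereProd F ⟨x, hx⟩).1 else 0

lemma measurable_radialExtension [FiniteDimensional ℝ F] [MeasurableSpace F] [BorelSpace F]
    {φ : sphere (0 : F) 1 → ℝ≥0∞} (hφ : Measurable φ) : Measurable (radialExtension φ) := by
  classical
  exact Measurable.dite (s := ({0}ᶜ : Set F)) (g := fun _ => 0)
    (hφ.comp (measurable_fst.comp (homeomorphUnitSphereProd F).measurable)) measurable_const
    (measurableSet_singleton _).compl

lemma radialExtension_smul (φ : sphere (0 : F) 1 → ℝ≥0∞) {r : ℝ} (hr : 0 < r) (x : F) :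
    radialExtension φ (r • x) = radialExtension φ x := by
  rcases eq_or_ne x 0 with rfl | hx
  · rw [smul_zero]
  have hrx : r • x ∈ ({0}ᶜ : Set F) := smul_ne_zero hr.ne' hx
  rw [radialExtension, radialExtension, dif_pos hrx, dif_pos (Set.mem_compl_singleton_iff.2 hx)]
  congr 1
  ext1
  simp only [homeomorphUnitSphereProd_apply_fst_coe, norm_smul, Real.norm_of_nonneg hr.le,
    smul_smul]
  congr 1
  field_simp

lemma radialExtension_coe (φ : sphere (0 : F) 1 → ℝ≥0∞) (θ : sphere (0 : F) 1) :
    radialExtension φ θ = φ θ := by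
  rw [radialExtension, dif_pos (Set.mem_compl_singleton_iff.2 (ne_zero_of_mem_unit_sphere θ))]
  congr 1
  ext1
  simp [homeomorphUnitSphereProd_apply_fst_coe]

end RadialExtension

variable {m : ℕ} {φ : sphere (0 : EuclideanSpace ℝ (Fin (m + 1))) 1 → ℝ≥0∞}

instance isProbabilityMeasure_sphMeasure : IsProbabilityMeasure (sphMeasure (m + 1)) :=
  have : NeZero (volume : Measure (EuclideanSpace ℝ (Fin (m + 1)))).toSphere :=
    ⟨Measure.toSphere_ne_zero _⟩
  isProbabilityMeasureSMul

lemma finrank_orthogonal_span_sphere (w : sphere (0 : EuclideanSpace ℝ (Fin (m + 1))) 1) :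
    Module.finrank ℝ (ℝ ∙ (w : EuclideanSpace ℝ (Fin (m + 1))))ᗮ = m := by
  have := finrank_orthogonal_span_singleton_add_one (norm_eq_of_mem_sphere w)
  simpa using this

lemma nontrivial_orthogonal_span_sphere (hm : m ≠ 0)
    (w : sphere (0 : EuclideanSpace ℝ (Fin (m + 1))) 1) :
    Nontrivial (ℝ ∙ (w : EuclideanSpace ℝ (Fin (m + 1))))ᗮ :=
  Module.nontrivial_of_finrank_pos (R := ℝ) (by rw [finrank_orthogonal_span_sphere w]; omega)

lemma volume_unitBall_orthogonal_span_sphere (hm : m ≠ 0)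
    (w : sphere (0 : EuclideanSpace ℝ (Fin (m + 1))) 1) :
    volume (ball (0 : (ℝ ∙ (w : EuclideanSpace ℝ (Fin (m + 1))))ᗮ) 1) =
      volume (ball (0 : EuclideanSpace ℝ (Fin m)) 1) := by
  have := nontrivial_orthogonal_span_sphere hm w
  have : Nonempty (Fin m) := ⟨⟨0, by omega⟩⟩
  simp [InnerProductSpace.volume_ball, finrank_orthogonal_span_sphere w]

lemma funk_one (hm : m ≠ 0) (w : sphere (0 : EuclideanSpace ℝ (Fin (m + 1))) 1) :
    Funk (m + 1) (fun _ => 1) w = 1 := by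
  have := nontrivial_orthogonal_span_sphere hm w
  rw [Funk, lintegral_one]
  exact ENNReal.inv_mul_cancel (Measure.measure_univ_ne_zero.2 (Measure.toSphere_ne_zero _))
    (measure_ne_top _ _)

/-- The star body whose sections `K ∩ w^⊥` have volume proportional to `Funk (m + 1) φ w`. -/
def funkBody (φ : sphere (0 : EuclideanSpace ℝ (Fin (m + 1))) 1 → ℝ≥0∞) :
    Set (EuclideanSpace ℝ (Fin (m + 1))) :=
  starBody fun x => radialExtension φ x ^ (m : ℝ)⁻¹

lemma measurableSet_funkBody (hφ : Measurable φ) : MeasurableSet (funkBody φ) :=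
  measurableSet_starBody ((measurable_radialExtension hφ).pow_const _)

lemma volume_funkBody (hφ : Measurable φ) :
    volume (funkBody φ) = volume (ball (0 : EuclideanSpace ℝ (Fin (m + 1))) 1) *
      ∫⁻ θ, φ θ ^ (((m + 1 : ℕ) : ℝ) / m) ∂sphMeasure (m + 1) := by
  rw [funkBody, measure_starBody volume ((measurable_radialExtension hφ).pow_const _)
    fun r hr x => by rw [radialExtension_smul φ hr], sphMeasure, lintegral_smul_measure,
    smul_eq_mul, finrank_euclideanSpace_fin]
  simp only [radialExtension_coe, ← ENNReal.rpow_mul_natCast, div_eq_inv_mul]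

lemma volume_preimage_coe_funkBody (hm : m ≠ 0) (hφ : Measurable φ)
    (w : sphere (0 : EuclideanSpace ℝ (Fin (m + 1))) 1) :
    volume ((↑) ⁻¹' funkBody φ : Set (ℝ ∙ (w : EuclideanSpace ℝ (Fin (m + 1))))ᗮ) =
      volume (ball (0 : EuclideanSpace ℝ (Fin m)) 1) * Funk (m + 1) φ w := by
  have := nontrivial_orthogonal_span_sphere hm w
  have hρ : Measurable fun y : (ℝ ∙ (w : EuclideanSpace ℝ (Fin (m + 1))))ᗮ =>
      radialExtension φ (y : EuclideanSpace ℝ (Fin (m + 1))) ^ (m : ℝ)⁻¹ :=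
    ((measurable_radialExtension hφ).pow_const _).comp measurable_subtype_coe
  refine (measure_starBody volume hρ fun r hr y => ?_).trans ?_
  · rw [Submodule.coe_smul, radialExtension_smul φ hr]
  rw [volume_unitBall_orthogonal_span_sphere hm, finrank_orthogonal_span_sphere, Funk]
  congr 2
  refine lintegral_congr fun v => ?_
  rw [ENNReal.rpow_inv_natCast_pow hm]
  exact radialExtension_coe φ ⟨v, _⟩

lemma volume_preimage_coe_closedBall (hm : m ≠ 0)
    (w : sphere (0 : EuclideanSpace ℝ (Fin (m + 1))) 1) :
    volume ((↑) ⁻¹' closedBall (0 : EuclideanSpace ℝ (Fin (m + 1))) 1 :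
        Set (ℝ ∙ (w : EuclideanSpace ℝ (Fin (m + 1))))ᗮ) =
      volume (ball (0 : EuclideanSpace ℝ (Fin m)) 1) := by
  rw [← volume_unitBall_orthogonal_span_sphere hm w,
    ← Measure.addHaar_unitClosedBall_eq_addHaar_unitBall]
  rfl

theorem lintegral_funk_pow_le (hm : m ≠ 0) (hφ : Measurable φ) :
    ∫⁻ w, Funk (m + 1) φ w ^ (m + 1) ∂sphMeasure (m + 1) ≤
      (∫⁻ θ, φ θ ^ (((m + 1 : ℕ) : ℝ) / m) ∂sphMeasure (m + 1)) ^ m := by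
  have h := lintegral_volume_section_pow_mul_le hm finrank_euclideanSpace_fin
    (measurableSet_funkBody hφ)
  simp only [volume_preimage_coe_funkBody hm hφ, volume_preimage_coe_closedBall hm, mul_pow,
    lintegral_const, volume_funkBody hφ] at h
  rw [Measure.addHaar_unitClosedBall_eq_addHaar_unitBall] at h
  set κ := volume (ball (0 : EuclideanSpace ℝ (Fin m)) 1)
  set Φ := ∫⁻ θ, φ θ ^ (((m + 1 : ℕ) : ℝ) / m) ∂sphMeasure (m + 1)
  set ω := volume (ball (0 : EuclideanSpace ℝ (Fin (m + 1))) 1)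
  have hκ : κ ^ (m + 1) ≠ ∞ := ENNReal.pow_ne_top measure_ball_lt_top.ne
  rw [lintegral_const_mul' _ _ hκ] at h
  have hc : κ ^ (m + 1) * ω ^ m ≠ ∞ :=
    ENNReal.mul_ne_top hκ (ENNReal.pow_ne_top measure_ball_lt_top.ne)
  have hc0 : κ ^ (m + 1) * ω ^ m ≠ 0 :=
    mul_ne_zero (pow_ne_zero _ (measure_ball_pos _ _ one_pos).ne')
      (pow_ne_zero _ (measure_ball_pos _ _ one_pos).ne')
  rw [sphMeasure, lintegral_smul_measure, smul_eq_mul, ← ENNReal.div_eq_inv_mul]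
  set I := ∫⁻ w, Funk (m + 1) φ w ^ (m + 1)
    ∂(volume : Measure (EuclideanSpace ℝ (Fin (m + 1)))).toSphere
  set σ := (volume : Measure (EuclideanSpace ℝ (Fin (m + 1)))).toSphere Set.univ
  refine ENNReal.div_le_of_le_mul ((ENNReal.mul_le_mul_iff_right hc0 hc).1 ?_)
  calc κ ^ (m + 1) * ω ^ m * I = κ ^ (m + 1) * I * ω ^ m := by ring
    _ ≤ κ ^ (m + 1) * σ * (ω ^ m * Φ ^ m) := h
    _ = κ ^ (m + 1) * ω ^ m * (Φ ^ m * σ) := by ring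

end Funk

/-- The sharp `L^{n/(n-1)} → L^n` inequality, with constant 1, for the codimension-one Funk
transform; no symmetry assumption on `φ` is required, and the constant `1` is sharp. -/
theorem stmt13 (n : ℕ) (hn : 3 ≤ n) :
    (∀ φ : sphere (0 : EuclideanSpace ℝ (Fin n)) 1 → ℝ≥0∞, Measurable φ →
      (∫⁻ w, Funk n φ w ^ (n : ℝ) ∂(sphMeasure n)) ^ (1 / (n : ℝ)) ≤
        (∫⁻ θ, φ θ ^ ((n : ℝ) / ((n : ℝ) - 1)) ∂(sphMeasure n)) ^ (((n : ℝ) - 1) / (n : ℝ))) ∧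
    (∀ C : ℝ≥0∞,
      (∀ φ : sphere (0 : EuclideanSpace ℝ (Fin n)) 1 → ℝ≥0∞, Measurable φ →
        (∫⁻ w, Funk n φ w ^ (n : ℝ) ∂(sphMeasure n)) ^ (1 / (n : ℝ)) ≤
          C * (∫⁻ θ, φ θ ^ ((n : ℝ) / ((n : ℝ) - 1)) ∂(sphMeasure n)) ^
            (((n : ℝ) - 1) / (n : ℝ))) →
      1 ≤ C) := by
  obtain ⟨m, rfl⟩ : ∃ m, n = m + 1 := ⟨n - 1, by omega⟩
  have hm : m ≠ 0 := by omega
  have hsub : ((m + 1 : ℕ) : ℝ) - 1 = m := by push_cast; ring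
  rw [hsub]
  refine ⟨fun φ hφ => ?_, fun C hC => ?_⟩
  · simp only [ENNReal.rpow_natCast]
    rw [div_eq_mul_one_div (m : ℝ), ENNReal.rpow_mul, ENNReal.rpow_natCast]
    exact ENNReal.rpow_le_rpow (lintegral_funk_pow_le hm hφ) (by positivity)
  · simpa [funk_one hm] using hC (fun _ => 1) measurable_const
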